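/- arXiv:1407.3951 — 12 statements merged into one kernel-verified Lean document; each statement's English description precedes it below -/
import Mathlib

section
/- Let Y be a compact, path-connected metric space having at least two points and such that there exists a continuous surjection from I onto Y. Then the set CS(I,Y) of continuous surjections I → Y is not a compact subset of C(I,Y) endowed with the uniform metric ρ. -/
/-!
Let `U` be an open set of `Y` that is neither empty nor everything. Every surjection `I → Y` takes
a value in `U`, so the open sets `{g | g x ∈ U}`, `x ∈ I`, cover the set of surjections. No finite
subfamily does: by Tietze, there is a surjection `I → I` that collapses a given finite set to any
prescribed point, and composing a surjection `f : I → Y` with it gives a surjection that sends the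
finite set to a point outside `U`. Only point evaluations enter, so the domain `I` may be replaced
by any nontrivial connected T₄ space.
-/

open Function Set unitInterval

universe u v

section

variable {X : Type u} {Y : Type v} [TopologicalSpace X] [TopologicalSpace Y]

theorem exists_finite_forall_exists_mem_of_isCompact {K : Set C(X, Y)} (hK : IsCompact K)
    {U : Set Y} (hU : IsOpen U) (hKU : ∀ f ∈ K, ∃ x, f x ∈ U) :
    ∃ s : Set X, s.Finite ∧ ∀ f ∈ K, ∃ x ∈ s, f x ∈ U := by
  obtain ⟨s, hs⟩ := hK.elim_finite_subcover (fun x ↦ {f : C(X, Y) | f x ∈ U})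
    (fun x ↦ hU.preimage (continuous_eval_const x))
    (fun f hf ↦ mem_iUnion.2 (hKU f hf))
  exact ⟨s, s.finite_toSet, fun f hf ↦ by simpa using hs hf⟩

theorem exists_continuousMap_eqOn_of_finite [T4Space X] [TietzeExtension.{u, v} Y] {s : Set X}
    (hs : s.Finite) (φ : X → Y) : ∃ g : C(X, Y), EqOn g φ s := by
  have : DiscreteTopology s := hs.instDiscreteTopology
  obtain ⟨g, hg⟩ :=
    ContinuousMap.exists_restrict_eq hs.isClosed ⟨s.domRestrict φ, continuous_of_discreteTopology⟩
  exact ⟨g, fun x hx ↦ DFunLike.congr_fun hg ⟨x, hx⟩⟩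

theorem surjective_of_eq_bot_of_eq_top [PreconnectedSpace X] [LinearOrder Y] [BoundedOrder Y]
    [OrderClosedTopology Y] {g : X → Y} (hg : Continuous g) {c d : X} (hc : g c = ⊥)
    (hd : g d = ⊤) : Surjective g := fun _ ↦
  intermediate_value_univ c d hg ⟨hc.trans_le bot_le, le_top.trans_eq hd.symm⟩

theorem exists_surjective_unitInterval_eqOn_const [T4Space X] [PreconnectedSpace X] [Nontrivial X]
    {s : Set X} (hs : s.Finite) (b : I) :
    ∃ p : C(X, I), Surjective p ∧ EqOn p (const X b) s := by
  classical
  have : Infinite X := PreconnectedSpace.infinite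
  obtain ⟨c, hc, d, hd, hcd⟩ := hs.infinite_compl.nontrivial
  obtain ⟨p, hp⟩ := exists_continuousMap_eqOn_of_finite ((hs.insert d).insert c)
    (update (update (const X b) d 1) c 0)
  have hpc : p c = 0 := by simpa using hp (mem_insert c _)
  have hpd : p d = 1 := by simpa [hcd.symm] using hp (mem_insert_of_mem c (mem_insert d s))
  refine ⟨p, surjective_of_eq_bot_of_eq_top p.continuous hpc hpd, fun x hx ↦ ?_⟩
  rw [hp (mem_insert_of_mem c (mem_insert_of_mem d hx)),
    update_of_ne (ne_of_mem_of_not_mem hx hc), update_of_ne (ne_of_mem_of_not_mem hx hd)]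

theorem exists_isOpen_nonempty_compl_nonempty [NontrivialTopology Y] :
    ∃ U : Set Y, IsOpen U ∧ U.Nonempty ∧ Uᶜ.Nonempty := by
  obtain ⟨y, z, hyz⟩ := ‹NontrivialTopology Y›.exists_not_inseparable
  obtain ⟨U, hU, ⟨hy, hz⟩ | ⟨hz, hy⟩⟩ := not_inseparable_iff_exists_open.1 hyz
  exacts [⟨U, hU, ⟨y, hy⟩, ⟨z, hz⟩⟩, ⟨U, hU, ⟨z, hz⟩, ⟨y, hy⟩⟩]

theorem peano_not_compact_general [T4Space X] [PreconnectedSpace X] [Nontrivial X]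
    [NontrivialTopology Y] (hY : ∃ f : C(I, Y), Surjective f) :
    ¬ IsCompact {f : C(X, Y) | Surjective f} := by
  intro hK
  obtain ⟨f, hf⟩ := hY
  obtain ⟨U, hU, ⟨y, hy⟩, z, hz⟩ := exists_isOpen_nonempty_compl_nonempty (Y := Y)
  obtain ⟨b, rfl⟩ := hf z
  have meets_U : ∀ g ∈ {g : C(X, Y) | Surjective g}, ∃ x, g x ∈ U := fun _ hg ↦ hg.exists.1 ⟨y, hy⟩
  obtain ⟨s, hs, hsU⟩ := exists_finite_forall_exists_mem_of_isCompact hK hU meets_U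
  obtain ⟨p, hp, hpb⟩ := exists_surjective_unitInterval_eqOn_const hs b
  obtain ⟨x, hx, hxU⟩ := hsU (f.comp p) (hf.comp hp)
  exact hz (by simpa [hpb hx] using hxU)

end

theorem peano_not_compact (Y : Type*) [MetricSpace Y] [CompactSpace Y]
    [PathConnectedSpace Y] [Nontrivial Y]
    (hY : ∃ f : C(unitInterval, Y), Function.Surjective ⇑f) :
    ¬ IsCompact {f : C(unitInterval, Y) | Function.Surjective ⇑f} :=
  peano_not_compact_general hY
end

section
/- The set 𝒫 = CS(I,I²) of Peano curves is strongly porous in the metric space (C(I,I²), ρ): for every α ∈ (0,1), every f ∈ C(I,I²) and every ε > 0, there exists g ∈ C(I,I²) with 0 < ρ(f,g) < ε such that the open ball B_ρ(g, α·ρ(f,g)) contains no continuous surjection of I onto I². -/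
/-!
Pull `f` towards a constant `c` by a proportion `δ`, so that `g = (1 - δ) f + δ c`. If `R` is the
largest distance from `c` to a value of `f`, attained at `f t`, then `ρ(f, g) = δ R` while `g` takes
its values within `(1 - δ) R` of `c`. So the point `f t` lies at distance at least `ρ(f, g)` from
the image of `g`, and every map at distance less than `ρ(f, g)` from `g` misses it.
-/

theorem notMem_range_of_forall_le_dist {X Z : Type*} [TopologicalSpace X] [CompactSpace X]
    [PseudoMetricSpace Z] {g h : C(X, Z)} {z : Z} {r : ℝ} (hz : ∀ x, r ≤ dist (g x) z)
    (hh : h ∈ Metric.ball g r) : z ∉ Set.range h := by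
  rintro ⟨x, rfl⟩
  refine (hz x).not_gt ?_
  calc dist (g x) (h x) ≤ dist g h := ContinuousMap.dist_apply_le_dist x
    _ < r := Metric.mem_ball'.mp hh

theorem exists_forall_dist_apply_le {X Z : Type*} [TopologicalSpace X] [CompactSpace X]
    [Nonempty X] [PseudoMetricSpace Z] (f : C(X, Z)) (c : Z) :
    ∃ t, ∀ x, dist (f x) c ≤ dist (f t) c := by
  obtain ⟨t, -, ht⟩ := isCompact_univ.exists_isMaxOn Set.univ_nonempty
    (f := fun x ↦ dist (f x) c) (by fun_prop)
  exact ⟨t, fun x ↦ ht (Set.mem_univ x)⟩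

theorem exists_continuousMap_lineMap {Z E : Type*} [TopologicalSpace Z] [AddCommGroup E]
    [Module ℝ E] [TopologicalSpace E] [IsTopologicalAddGroup E] [ContinuousSMul ℝ E] {ι : Z → E}
    (hι : Topology.IsInducing ι) (hconv : Convex ℝ (Set.range ι)) (c : Z) {δ : ℝ}
    (hδ : δ ∈ Set.Icc (0 : ℝ) 1) :
    ∃ T : C(Z, Z), ∀ z, ι (T z) = AffineMap.lineMap (ι z) (ι c) δ := by
  have hmem (z : Z) : AffineMap.lineMap (ι z) (ι c) δ ∈ Set.range ι :=
    hconv.lineMap_mem ⟨z, rfl⟩ ⟨c, rfl⟩ hδ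
  choose T hT using hmem
  refine ⟨⟨T, hι.continuous_iff.2 ?_⟩, hT⟩
  have hcont : Continuous fun z ↦ AffineMap.lineMap (ι z) (ι c) δ := by
    simp only [AffineMap.lineMap_apply_module]
    have := hι.continuous
    fun_prop
  exact hcont.congr fun z ↦ (hT z).symm

section ConvexRange

variable {Z E : Type*} [SeminormedAddCommGroup E] [NormedSpace ℝ E] {ι : Z → E}

theorem exists_continuousMap_dist_eq_mul_dist [PseudoMetricSpace Z] (hι : Isometry ι)
    (hconv : Convex ℝ (Set.range ι)) (c : Z) {δ : ℝ} (hδ : δ ∈ Set.Icc (0 : ℝ) 1) :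
    ∃ T : C(Z, Z), ∀ z, dist z (T z) = δ * dist z c ∧ dist (T z) c = (1 - δ) * dist z c := by
  obtain ⟨T, hT⟩ := exists_continuousMap_lineMap hι.isUniformInducing.isInducing hconv c hδ
  refine ⟨T, fun z ↦ ⟨?_, ?_⟩⟩
  · rw [← hι.dist_eq, hT, dist_left_lineMap, hι.dist_eq, Real.norm_of_nonneg hδ.1]
  · rw [← hι.dist_eq, hT, dist_lineMap_right, hι.dist_eq,
      Real.norm_of_nonneg (sub_nonneg.2 hδ.2)]

theorem peano_strongly_porous_general {X : Type*} [TopologicalSpace X] [CompactSpace X]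
    [Nonempty X] [MetricSpace Z] [Nontrivial Z] (hι : Isometry ι)
    (hconv : Convex ℝ (Set.range ι)) (f : C(X, Z)) {ε : ℝ} (hε : 0 < ε) :
    ∃ g : C(X, Z), 0 < dist f g ∧ dist f g < ε ∧
      ∀ h ∈ Metric.ball g (dist f g), ¬ Function.Surjective h := by
  obtain ⟨c, hc⟩ := exists_ne (f (Classical.arbitrary X))
  obtain ⟨t, ht⟩ := exists_forall_dist_apply_le f c
  set R := dist (f t) c
  have hR : 0 < R := (dist_pos.2 hc.symm).trans_le (ht _)
  obtain ⟨δ, hδ₀, hδ₁, hδε⟩ : ∃ δ : ℝ, 0 < δ ∧ δ ≤ 1 ∧ δ * R < ε := by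
    refine ⟨ε / (ε + R), by positivity, div_le_one_of_le₀ (by linarith) (by positivity), ?_⟩
    rw [div_mul_eq_mul_div, div_lt_iff₀ (by positivity)]
    gcongr
    linarith
  obtain ⟨T, hT⟩ := exists_continuousMap_dist_eq_mul_dist hι hconv c ⟨hδ₀.le, hδ₁⟩
  have hle : dist f (T.comp f) ≤ δ * R := by
    refine (ContinuousMap.dist_le (by positivity)).2 fun x ↦ (hT (f x)).1.trans_le ?_
    gcongr
    exact ht x
  have hpos : 0 < dist f (T.comp f) :=
    calc 0 < δ * R := by positivity
      _ = dist (f t) (T (f t)) := (hT (f t)).1.symm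
      _ ≤ dist f (T.comp f) := ContinuousMap.dist_apply_le_dist (g := T.comp f) t
  have hfar (x : X) : δ * R ≤ dist (T (f x)) (f t) := by
    have hnear : dist (T (f x)) c ≤ (1 - δ) * R :=
      (hT (f x)).2.trans_le (mul_le_mul_of_nonneg_left (ht x) (sub_nonneg.2 hδ₁))
    have htri : R ≤ dist (T (f x)) (f t) + dist (T (f x)) c := dist_triangle_left _ _ _
    linarith
  exact ⟨T.comp f, hpos, hle.trans_lt hδε, fun h hh hsurj ↦
    notMem_range_of_forall_le_dist (fun x ↦ hle.trans (hfar x)) hh (hsurj (f t))⟩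

end ConvexRange

theorem convex_range_prodMap_subtype_val {E F : Type*} [AddCommMonoid E] [Module ℝ E]
    [AddCommMonoid F] [Module ℝ F] {s : Set E} {t : Set F} (hs : Convex ℝ s)
    (ht : Convex ℝ t) :
    Convex ℝ (Set.range (Prod.map Subtype.val Subtype.val : s × t → E × F)) := by
  simpa only [Set.range_prodMap, Subtype.range_coe] using hs.prod ht

theorem peano_strongly_porous (α : ℝ) (hα : α ∈ Set.Ioo (0 : ℝ) 1)
    (f : C(unitInterval, unitInterval × unitInterval)) (ε : ℝ) (hε : 0 < ε) :
    ∃ g : C(unitInterval, unitInterval × unitInterval),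
      0 < dist f g ∧ dist f g < ε ∧
      ∀ h ∈ Metric.ball g (α * dist f g), ¬ Function.Surjective ⇑h := by
  obtain ⟨g, hpos, hlt, hball⟩ := peano_strongly_porous_general
    (isometry_subtype_coe.prodMap isometry_subtype_coe)
    (convex_range_prodMap_subtype_val (convex_Icc 0 1) (convex_Icc 0 1)) f hε
  exact ⟨g, hpos, hlt, fun h hh ↦
    hball h (Metric.ball_subset_ball (mul_le_of_le_one_left dist_nonneg hα.2.le) hh)⟩
end

section
/- For every N ∈ ℕ there exist continuous maps f₁, …, f_N : I → ℝ² such that the range of each f_i is exactly I² (so each f_i is a Peano curve) and the range of the pointwise sum f₁ + ⋯ + f_N is also exactly I². -/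
/-!
Inside the `ι`-fold power of a convex set `C` containing `0`, consider the families whose sum lies
in `C` again. They form a convex set, and each coordinate, as well as the sum, maps it onto `C`,
because all entries of a family but one may vanish. If `C` is a compact subset of a
finite-dimensional space, the nearest-point projection makes this convex set a retract of the
ambient space, so a continuous surjection onto it from the Cantor set extends to a curve on the unit
interval. The coordinates of one such curve are the required summands.
-/

open Set Topology
open scoped RealInnerProductSpace

section NearestPoint

variable {F : Type*} [NormedAddCommGroup F] [InnerProductSpace ℝ F]

theorem norm_sub_le_of_inner_sub_nonpos {u v p q : F}
    (hp : ⟪u - p, q - p⟫ ≤ 0) (hq : ⟪v - q, p - q⟫ ≤ 0) : ‖p - q‖ ≤ ‖u - v‖ := by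
  have sq_le_inner : ‖p - q‖ * ‖p - q‖ ≤ ⟪u - v, p - q⟫ := by
    have inner_add : ⟪u - p, q - p⟫ + ⟪v - q, p - q⟫ = ⟪p - q, p - q⟫ - ⟪u - v, p - q⟫ := by
      rw [← neg_sub p q, inner_neg_right, ← inner_neg_left, ← inner_add_left, ← inner_sub_left]
      congr 1
      abel
    rw [← real_inner_self_eq_norm_mul_norm]
    linarith
  rcases (norm_nonneg (p - q)).eq_or_lt with h | h
  · exact h ▸ norm_nonneg _
  · exact le_of_mul_le_mul_right (sq_le_inner.trans (real_inner_le_norm _ _)) h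

theorem exists_lipschitzWith_one_retraction {K : Set F} (hne : K.Nonempty) (hK : IsComplete K)
    (hconv : Convex ℝ K) : ∃ r : F → K, LipschitzWith 1 r ∧ ∀ x : K, r x = x := by
  choose r hrK hr using exists_norm_eq_iInf_of_complete_convex hne hK hconv
  have inner_nonpos (u : F) : ∀ w ∈ K, ⟪u - r u, w - r u⟫ ≤ 0 :=
    (norm_eq_iInf_iff_real_inner_le_zero hconv (hrK u)).1 (hr u)
  refine ⟨fun u ↦ ⟨r u, hrK u⟩, LipschitzWith.of_dist_le_mul fun u v ↦ ?_, fun x ↦ ?_⟩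
  · rw [NNReal.coe_one, one_mul, Subtype.dist_eq, dist_eq_norm, dist_eq_norm]
    exact norm_sub_le_of_inner_sub_nonpos (inner_nonpos u _ (hrK v)) (inner_nonpos v _ (hrK u))
  · have inner_self_nonpos : ⟪x - r x, x - r x⟫ ≤ 0 := inner_nonpos x x x.2
    exact Subtype.ext (sub_eq_zero.1 (real_inner_self_nonpos.1 inner_self_nonpos)).symm

end NearestPoint

theorem exists_continuousMap_unitInterval_surjective (Y : Type*) [TopologicalSpace Y] [Nonempty Y]
    [CompactSpace Y] [TopologicalSpace.MetrizableSpace Y] [TietzeExtension.{0} Y] :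
    ∃ γ : C(unitInterval, Y), Function.Surjective γ := by
  let := TopologicalSpace.metrizableSpaceMetric Y
  obtain ⟨φ, hφ, hφ_surj⟩ := exists_nat_bool_continuous_surjective_of_compact Y
  let e : (ℕ → Bool) → unitInterval :=
    inclusion cantorSet_subset_unitInterval ∘ cantorSetHomeomorphNatToBool.symm
  have he : IsClosedEmbedding e :=
    ((continuous_inclusion _).comp (Homeomorph.continuous _)).isClosedEmbedding
      ((inclusion_injective _).comp (Homeomorph.injective _))
  obtain ⟨γ, hγ⟩ := ContinuousMap.exists_extension' he ⟨φ, hφ⟩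
  exact ⟨γ, Function.Surjective.of_comp (g := e) (hγ ▸ hφ_surj)⟩

/-- The families indexed by `ι` of elements of `C` whose sum belongs to `C` too: a curve filling
this set has coordinates in `C` with sum in `C`. -/
def familiesWithSumMem (ι : Type*) [Fintype ι] {M : Type*} [AddCommMonoid M] (C : Set M) :
    Set (ι → M) :=
  univ.pi (fun _ ↦ C) ∩ (fun x ↦ ∑ i, x i) ⁻¹' C

namespace familiesWithSumMem

variable {ι : Type*} [Fintype ι]

section AddCommMonoid

variable {M : Type*} [AddCommMonoid M] {C : Set M}

theorem zero_mem (h0 : 0 ∈ C) : 0 ∈ familiesWithSumMem ι C :=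
  ⟨fun _ _ ↦ h0, by simpa using h0⟩

theorem single_mem [DecidableEq ι] (h0 : 0 ∈ C) (i : ι) {c : M} (hc : c ∈ C) :
    Pi.single i c ∈ familiesWithSumMem ι C := by
  refine ⟨fun j _ ↦ ?_, ?_⟩
  · obtain rfl | hji := eq_or_ne j i
    · rwa [Pi.single_eq_same]
    · rwa [Pi.single_eq_of_ne hji]
  · rwa [mem_preimage, Fintype.sum_pi_single']

theorem image_eval (h0 : 0 ∈ C) (i : ι) : Function.eval i '' familiesWithSumMem ι C = C := by
  classical
  refine (image_subset_iff.2 fun x hx ↦ hx.1 i (mem_univ i)).antisymm fun c hc ↦ ?_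
  exact ⟨Pi.single i c, single_mem h0 i hc, Pi.single_eq_same (M := fun _ ↦ M) i c⟩

theorem image_sum [Nonempty ι] (h0 : 0 ∈ C) :
    (fun x ↦ ∑ i, x i) '' familiesWithSumMem ι C = C := by
  classical
  obtain ⟨i⟩ := ‹Nonempty ι›
  refine (image_subset_iff.2 inter_subset_right).antisymm fun c hc ↦ ?_
  exact ⟨Pi.single i c, single_mem h0 i hc, Fintype.sum_pi_single' i c⟩

theorem isCompact [TopologicalSpace M] [ContinuousAdd M] [T2Space M] (hC : IsCompact C) :
    IsCompact (familiesWithSumMem ι C) :=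
  (isCompact_univ_pi fun _ ↦ hC).inter_right (hC.isClosed.preimage (by fun_prop))

end AddCommMonoid

theorem convex {E : Type*} [AddCommGroup E] [Module ℝ E] {C : Set E} (hC : Convex ℝ C) :
    Convex ℝ (familiesWithSumMem ι C) :=
  (convex_pi fun _ _ ↦ hC).inter
    (hC.is_linear_preimage
      ⟨fun _ _ ↦ Finset.sum_add_distrib, fun _ _ ↦ by simp only [Pi.smul_apply, Finset.smul_sum]⟩)

end familiesWithSumMem

section FiniteDimensional

universe u v

variable {E : Type v} [AddCommGroup E] [Module ℝ E] [TopologicalSpace E] [IsTopologicalAddGroup E]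
  [ContinuousSMul ℝ E] [T2Space E] [FiniteDimensional ℝ E]

theorem exists_continuousMap_retraction {K : Set E} (hne : K.Nonempty) (hK : IsClosed K)
    (hconv : Convex ℝ K) : ∃ r : C(E, K), ∀ x : K, r x = x := by
  let e : E ≃L[ℝ] EuclideanSpace ℝ (Fin (Module.finrank ℝ E)) := toEuclidean
  obtain ⟨r, hr, hrK⟩ := exists_lipschitzWith_one_retraction (K := e.symm ⁻¹' K)
    (hne.preimage e.symm.surjective) (hK.preimage e.symm.continuous).isComplete
    (hconv.linear_preimage e.symm.toLinearMap)
  have hr_cont : Continuous r := hr.continuous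
  refine ⟨⟨fun x ↦ ⟨e.symm (r (e x)), (r (e x)).2⟩, by fun_prop⟩, fun x ↦ Subtype.ext ?_⟩
  have hex : e x ∈ e.symm ⁻¹' K := by rw [mem_preimage, e.symm_apply_apply]; exact x.2
  calc e.symm (r (e x)) = e.symm (e x) := by rw [hrK ⟨e x, hex⟩]
    _ = x := e.symm_apply_apply x

theorem tietzeExtension_of_convex {K : Set E} (hne : K.Nonempty) (hK : IsClosed K)
    (hconv : Convex ℝ K) : TietzeExtension.{u, v} K := by
  have : TietzeExtension.{u, v} E := .of_tvs ℝ
  obtain ⟨r, hr⟩ := exists_continuousMap_retraction hne hK hconv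
  exact .of_retract ⟨Subtype.val, continuous_subtype_val⟩ r (ContinuousMap.ext hr)

theorem exists_continuousMap_unitInterval_range_eq {K : Set E} (hne : K.Nonempty)
    (hK : IsCompact K) (hconv : Convex ℝ K) : ∃ γ : C(unitInterval, E), range γ = K := by
  have : TopologicalSpace.MetrizableSpace E :=
    (toEuclidean (E := E)).toHomeomorph.isEmbedding.metrizableSpace
  have : Nonempty K := hne.to_subtype
  have : CompactSpace K := isCompact_iff_compactSpace.1 hK
  have : TietzeExtension.{0} K := tietzeExtension_of_convex hne hK.isClosed hconv
  obtain ⟨γ, hγ⟩ := exists_continuousMap_unitInterval_surjective K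
  exact ⟨.comp ⟨Subtype.val, continuous_subtype_val⟩ γ,
    (hγ.range_comp Subtype.val).trans Subtype.range_coe⟩

theorem sum_of_peano_curves_general {ι : Type*} [Fintype ι] [Nonempty ι] {C : Set E}
    (h0 : 0 ∈ C) (hC : IsCompact C) (hconv : Convex ℝ C) :
    ∃ f : ι → C(unitInterval, E), (∀ i, range (f i) = C) ∧ range ⇑(∑ i, f i) = C := by
  obtain ⟨γ, hγ⟩ := exists_continuousMap_unitInterval_range_eq
    ⟨0, familiesWithSumMem.zero_mem (ι := ι) h0⟩
    (familiesWithSumMem.isCompact hC) (familiesWithSumMem.convex hconv)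
  let f (i : ι) : C(unitInterval, E) := ⟨fun t ↦ γ t i, by fun_prop⟩
  refine ⟨f, fun i ↦ ?_, ?_⟩
  · calc range (f i) = Function.eval i '' range γ := range_comp (Function.eval i) γ
      _ = C := by rw [hγ, familiesWithSumMem.image_eval h0]
  · calc range ⇑(∑ i, f i) = range ((fun x ↦ ∑ i, x i) ∘ γ) := by
          congr 1
          exact funext fun t ↦ ContinuousMap.sum_apply _ f t
      _ = (fun x ↦ ∑ i, x i) '' range γ := range_comp _ γ
      _ = C := by rw [hγ, familiesWithSumMem.image_sum h0]

end FiniteDimensional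

theorem sum_of_peano_curves (N : ℕ) (hN : 0 < N) :
    ∃ f : Fin N → C(unitInterval, ℝ × ℝ),
      (∀ i, Set.range ⇑(f i) = Set.Icc (0 : ℝ) 1 ×ˢ Set.Icc (0 : ℝ) 1) ∧
      Set.range ⇑(∑ i, f i) = Set.Icc (0 : ℝ) 1 ×ˢ Set.Icc (0 : ℝ) 1 := by
  have : NeZero N := ⟨hN.ne'⟩
  exact sum_of_peano_curves_general ⟨unitInterval.zero_mem, unitInterval.zero_mem⟩
    (isCompact_Icc.prod isCompact_Icc) ((convex_Icc 0 1).prod (convex_Icc 0 1))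
end

section
/- For every closed interval [a,b] ⊆ ℝ with a < b and every pair of points u, v ∈ I², there exists a continuous surjection Φ : [a,b] → I² such that Φ(a) = u and Φ(b) = v. -/
/-!
By the Hausdorff–Alexandroff theorem, a nonempty compact metrizable space `X` is a continuous image
of the Cantor space. An uncountable Polish space `Y` contains a copy of the Cantor space which
avoids two given points. If continuous maps into `X` extend from closed subsets, as Tietze's theorem
ensures for the square, a surjection from this copy onto `X` extends to all of `Y`, and its values
at the two points can be prescribed because they lie outside the copy.
-/

open Set Function Topology TopologicalSpace

universe u

theorem exists_nat_bool_continuous_surjective_of_compact_metrizable (X : Type*)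
    [TopologicalSpace X] [CompactSpace X] [MetrizableSpace X] [Nonempty X] :
    ∃ f : (ℕ → Bool) → X, Continuous f ∧ Surjective f := by
  let := metrizableSpaceMetric X
  exact exists_nat_bool_continuous_surjective_of_compact X

theorem exists_nat_bool_injection_of_isOpen_of_not_countable {Y : Type*} [TopologicalSpace Y]
    [PolishSpace Y] {U : Set Y} (hU : IsOpen U) (hU' : ¬U.Countable) :
    ∃ c : (ℕ → Bool) → Y, range c ⊆ U ∧ Continuous c ∧ Injective c := by
  have := hU.polishSpace
  have huniv : ¬(univ : Set U).Countable := by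
    rwa [countable_univ_iff, countable_coe_iff]
  obtain ⟨c, -, hc, hc'⟩ := isClosed_univ.exists_nat_bool_injection_of_not_countable huniv
  refine ⟨fun x ↦ c x, ?_, by fun_prop, Subtype.val_injective.comp hc'⟩
  rintro _ ⟨x, rfl⟩
  exact (c x).2

section Extension

variable {X Z : Type*} {Y : Type u} [TopologicalSpace X] [CompactSpace X] [MetrizableSpace X]
  [Nonempty X] [TietzeExtension.{u} X] [TopologicalSpace Y] [TopologicalSpace Z]

theorem exists_surjective_extension_of_cantor_embedding [T4Space Y]
    {c : (ℕ → Bool) → Y} (hc : Continuous c) (hc' : Injective c)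
    {i : Z → Y} (hi : IsClosedEmbedding i) (hci : Disjoint (range c) (range i)) (φ : C(Z, X)) :
    ∃ Φ : C(Y, X), Surjective Φ ∧ Φ ∘ i = φ := by
  obtain ⟨f, hf, hf'⟩ := exists_nat_bool_continuous_surjective_of_compact_metrizable X
  have hinj : Injective (Sum.elim c i) :=
    hc'.sumElim hi.injective fun x z ↦ disjoint_range_iff.mp hci x z
  obtain ⟨Φ, hΦ⟩ := ContinuousMap.exists_extension'
    ((hc.isClosedEmbedding hc').sumElim hi hinj) ⟨Sum.elim f φ, hf.sumElim φ.continuous⟩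
  have hΦc : Φ ∘ c = f := funext fun x ↦ congrFun hΦ (.inl x)
  have hΦi : Φ ∘ i = φ := funext fun z ↦ congrFun hΦ (.inr z)
  exact ⟨Φ, .of_comp (hΦc ▸ hf'), hΦi⟩

theorem exists_surjective_extension_of_not_countable_compl [PolishSpace Y]
    {i : Z → Y} (hi : IsClosedEmbedding i) (hi' : ¬(range i)ᶜ.Countable) (φ : C(Z, X)) :
    ∃ Φ : C(Y, X), Surjective Φ ∧ Φ ∘ i = φ := by
  obtain ⟨c, hci, hc, hc'⟩ := exists_nat_bool_injection_of_isOpen_of_not_countable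
    hi.isClosed_range.isOpen_compl hi'
  exact exists_surjective_extension_of_cantor_embedding hc hc' hi
    (disjoint_compl_left.mono_left hci) φ

end Extension

theorem tietzeExtension_setProd {E F : Type*} [TopologicalSpace E] [TopologicalSpace F] (s : Set E)
    (t : Set F) [TietzeExtension.{u} s] [TietzeExtension.{u} t] :
    TietzeExtension.{u} ↥(s ×ˢ t) :=
  .of_homeo (Homeomorph.Set.prod s t)

theorem uncountable_Icc_of_lt {a b : ℝ} (hab : a < b) : Uncountable (Icc a b) := by
  rw [← not_countable_iff, countable_coe_iff, Cardinal.Real.Icc_countable_iff]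
  exact hab.not_ge

theorem peano_curve_prescribed_endpoints_general {E : Type*} {Y : Type u} [TopologicalSpace E]
    {s : Set E} [MetrizableSpace s] [TietzeExtension.{u} s] (hs : IsCompact s)
    [TopologicalSpace Y] [PolishSpace Y] [Uncountable Y] {p q : Y} (hpq : p ≠ q)
    {u v : E} (hu : u ∈ s) (hv : v ∈ s) :
    ∃ Φ : Y → E, Continuous Φ ∧ range Φ = s ∧ Φ p = u ∧ Φ q = v := by
  have : CompactSpace s := isCompact_iff_compactSpace.mp hs
  have : Nonempty s := ⟨⟨u, hu⟩⟩
  let i : Bool → Y := fun b ↦ cond b p q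
  have hi : IsClosedEmbedding i :=
    continuous_of_discreteTopology.isClosedEmbedding (Bool.injective_iff.mpr hpq.symm)
  have hi' : ¬(range i)ᶜ.Countable := fun h ↦
    not_countable_univ <| union_compl_self (range i) ▸ (countable_range i).union h
  let φ : C(Bool, s) := ⟨fun b ↦ cond b ⟨u, hu⟩ ⟨v, hv⟩, continuous_of_discreteTopology⟩
  obtain ⟨Φ, hΦ, hΦi⟩ := exists_surjective_extension_of_not_countable_compl hi hi' φ
  exact ⟨fun y ↦ Φ y, by fun_prop, (hΦ.range_comp Subtype.val).trans Subtype.range_coe,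
    congrArg Subtype.val (congrFun hΦi true), congrArg Subtype.val (congrFun hΦi false)⟩

theorem peano_curve_prescribed_endpoints (a b : ℝ) (hab : a < b) (u v : ℝ × ℝ)
    (hu : u ∈ Set.Icc (0 : ℝ) 1 ×ˢ Set.Icc (0 : ℝ) 1)
    (hv : v ∈ Set.Icc (0 : ℝ) 1 ×ˢ Set.Icc (0 : ℝ) 1) :
    ∃ Φ : Set.Icc a b → ℝ × ℝ, Continuous Φ ∧
      Set.range Φ = Set.Icc (0 : ℝ) 1 ×ˢ Set.Icc (0 : ℝ) 1 ∧
      Φ ⟨a, Set.left_mem_Icc.mpr hab.le⟩ = u ∧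
      Φ ⟨b, Set.right_mem_Icc.mpr hab.le⟩ = v := by
  have := uncountable_Icc_of_lt hab
  have := isClosed_Icc.polishSpace (s := Icc a b)
  have := tietzeExtension_setProd (Icc (0 : ℝ) 1) (Icc (0 : ℝ) 1)
  exact peano_curve_prescribed_endpoints_general (isCompact_Icc.prod isCompact_Icc)
    (Subtype.coe_ne_coe.mp hab.ne) hu hv
end

section
/- The family 𝒮ℱ of space-filling curves has empty interior in the Banach space C(I,ℝ²) with the supremum norm. -/
/-- A continuous map `φ : I → ℝ²` is a space-filling curve if its image is Jordan
measurable with positive Jordan content; equivalently, the Lebesgue measure of the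
topological boundary of its image is zero and the interior of its image is nonempty. -/
def SpaceFilling : Set C(unitInterval, ℝ × ℝ) :=
  {φ | MeasureTheory.volume (frontier (Set.range ⇑φ)) = 0 ∧
       (interior (Set.range ⇑φ)).Nonempty}

/-!
A smooth map from a space of smaller dimension has null image, hence an image with empty interior.
By Tietze's extension theorem, maps which extend smoothly to the ambient space are dense among the
continuous maps on a closed subset, so every continuous curve is a limit of curves whose image has
empty interior.
-/

open Set Module Topology
open scoped ContDiff

section

universe u v

variable {X : Type*} {E : Type u} {F : Type v} [TopologicalSpace X] {e : X → E}
  [NormedAddCommGroup E] [NormedSpace ℝ E] [FiniteDimensional ℝ E]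
  [NormedAddCommGroup F] [NormedSpace ℝ F]

theorem interior_range_eq_empty_of_contDiff {g : E → F} (hg : ContDiff ℝ 1 g)
    (hEF : finrank ℝ E < finrank ℝ F) : interior (range g) = ∅ :=
  have : FiniteDimensional ℝ F := finite_of_finrank_pos (Nat.zero_lt_of_lt hEF)
  interior_eq_empty_iff_dense_compl.2 (hg.dense_compl_range_of_finrank_lt_finrank hEF)

theorem dense_image_comp_contDiff [CompleteSpace F] [TietzeExtension.{u, v} F]
    (he : IsClosedEmbedding e) :
    Dense ((fun g : C(E, F) ↦ g.comp ⟨e, he.continuous⟩) '' {g | ContDiff ℝ ∞ g}) :=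
  have extends_to_E : Function.Surjective fun g : C(E, F) ↦ g.comp ⟨e, he.continuous⟩ :=
    ContinuousMap.exists_extension he
  extends_to_E.denseRange.dense_image (ContinuousMap.continuous_precomp _)
    ContinuousMap.dense_setOfPred_contDiff

theorem spaceFilling_empty_interior_general (he : IsClosedEmbedding e)
    (hEF : finrank ℝ E < finrank ℝ F) :
    interior {f : C(X, F) | (interior (range f)).Nonempty} = ∅ := by
  have : FiniteDimensional ℝ F := finite_of_finrank_pos (Nat.zero_lt_of_lt hEF)
  have : CompleteSpace F := FiniteDimensional.complete ℝ F
  have : TietzeExtension.{u, v} F := .of_tvs ℝ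
  refine interior_eq_empty_iff_dense_compl.2 ((dense_image_comp_contDiff he).mono ?_)
  rintro _ ⟨g, hg : ContDiff ℝ ∞ g, rfl⟩ (hne : (interior (range (g ∘ e))).Nonempty)
  have range_g : interior (range g) = ∅ :=
    interior_range_eq_empty_of_contDiff (hg.of_le (mod_cast le_top)) hEF
  exact (hne.mono (interior_mono (range_comp_subset_range e g))).ne_empty range_g

end

theorem spaceFilling_empty_interior : interior SpaceFilling = ∅ :=
  subset_eq_empty (interior_mono fun _ hφ ↦ hφ.2) <| spaceFilling_empty_interior_general
    (isClosed_Icc (a := (0 : ℝ)) (b := 1)).isClosedEmbedding_subtypeVal (by simp)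
end

section
/- The family 𝒮ℱ of space-filling curves is spaceable in C(I,ℝ²): there exists a closed, infinite-dimensional linear subspace M of the Banach space C(I,ℝ²) such that every nonzero element of M is a space-filling curve. -/
/-!
A Peano-type map `γ = (u, q)` from `X` onto `K × B`, with `B` the closed unit ball of `E`, turns
every scalar function `a` on `K` into the curve `t ↦ a (u t) • q t`. On the fibre `u = s` this curve
sweeps out the ball of radius `‖a s‖`, so its image is the union of these concentric balls, that is,
the ball of radius `‖a‖`. Hence `a ↦ (a ∘ u) • q` is a linear isometry, and its range is a closed
copy of `C(K, 𝕜)` in which the image of every element is a ball. The map `γ` exists because a Cantor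
set inside `X` can be mapped onto `K × B` (Hausdorff–Alexandroff), and this map extends to `X`
(Tietze).
-/

open Metric Set
open scoped Pointwise

universe u v

theorem exists_continuousMap_surjective (X : Type u) [TopologicalSpace X] [PolishSpace X]
    [Uncountable X] (Y : Type v) [TopologicalSpace Y] [CompactSpace Y]
    [TopologicalSpace.MetrizableSpace Y] [Nonempty Y] [TietzeExtension.{u, v} Y] :
    ∃ γ : C(X, Y), Function.Surjective γ := by
  let := TopologicalSpace.metrizableSpaceMetric Y
  obtain ⟨e, -, he, he_inj⟩ :=
    (isClosed_univ (X := X)).exists_nat_bool_injection_of_not_countable not_countable_univ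
  obtain ⟨f, hf, hf_surj⟩ := exists_nat_bool_continuous_surjective_of_compact Y
  obtain ⟨γ, hγ⟩ := ContinuousMap.exists_extension' (he.isClosedEmbedding he_inj) ⟨f, hf⟩
  exact ⟨γ, .of_comp (g := e) (hγ ▸ hf_surj)⟩

theorem toContinuousMapOnAlgHom_injective {R : Type*} [CommRing R] [IsDomain R]
    [TopologicalSpace R] [IsTopologicalSemiring R] {s : Set R} (hs : s.Infinite) :
    Function.Injective (Polynomial.toContinuousMapOnAlgHom s) := by
  intro p q hpq
  refine Polynomial.eq_of_infinite_eval_eq p q (hs.mono fun x hx ↦ ?_)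
  exact DFunLike.congr_fun hpq ⟨x, hx⟩

theorem not_finiteDimensional_continuousMap {𝕜 : Type*} [Field 𝕜] [TopologicalSpace 𝕜]
    [IsTopologicalRing 𝕜] {s : Set 𝕜} (hs : s.Infinite) : ¬ FiniteDimensional 𝕜 C(s, 𝕜) :=
  fun _ ↦ Polynomial.not_finite <| Module.Finite.of_injective
    (Polynomial.toContinuousMapOnAlgHom s).toLinearMap (toContinuousMapOnAlgHom_injective hs)

theorem iUnion_closedBall_norm_apply {K F E : Type*} [TopologicalSpace K] [CompactSpace K]
    [Nonempty K] [SeminormedAddCommGroup F] [SeminormedAddCommGroup E] (a : C(K, F)) :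
    ⋃ s, closedBall (0 : E) ‖a s‖ = closedBall 0 ‖a‖ := by
  refine (iUnion_subset fun s ↦ closedBall_subset_closedBall (a.norm_coe_le_norm s)).antisymm ?_
  obtain ⟨s, hs⟩ := a.continuous.norm.exists_forall_ge_of_hasCompactSupport
    (.of_compactSpace _)
  have ha : ‖a‖ ≤ ‖a s‖ := a.norm_le_of_nonempty.2 hs
  exact (closedBall_subset_closedBall ha).trans (subset_iUnion_of_subset s subset_rfl)

theorem norm_eq_of_range_eq_closedBall {X E : Type*} [TopologicalSpace X] [CompactSpace X]
    [NormedAddCommGroup E] [NormedSpace ℝ E] [Nontrivial E] {f : C(X, E)} {r : ℝ} (hr : 0 ≤ r)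
    (hf : range f = closedBall 0 r) : ‖f‖ = r := by
  refine le_antisymm ((f.norm_le hr).2 fun t ↦ ?_) ?_
  · exact mem_closedBall_zero_iff.1 (hf ▸ mem_range_self t)
  · obtain ⟨v, rfl⟩ := exists_norm_eq E hr
    obtain ⟨t, rfl⟩ : v ∈ range f := hf ▸ mem_closedBall_zero_iff.2 le_rfl
    exact f.norm_coe_le_norm t

theorem mem_spaceFilling_of_range_eq_closedBall {φ : C(unitInterval, ℝ × ℝ)} {p : ℝ × ℝ} {r : ℝ}
    (hr : 0 < r) (hφ : range φ = closedBall p r) : φ ∈ SpaceFilling := by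
  refine ⟨?_, ?_⟩ <;> rw [hφ]
  · exact (convex_closedBall p r).addHaar_frontier _
  · exact (nonempty_ball.2 hr).mono ball_subset_interior_closedBall

section ScaledCurve

variable {X K 𝕜 E : Type*} [TopologicalSpace X] [TopologicalSpace K] [NormedAddCommGroup E]

/-- The linear map `a ↦ (a ∘ u) • q` attached to a map `γ = (u, q)` into the product of a parameter
space `K` and the closed unit ball: the point `q t` of the ball is scaled by the value of `a` at the
parameter `u t`. -/
def scaledCurve [NormedField 𝕜] [NormedSpace 𝕜 E] (γ : C(X, K × closedBall (0 : E) 1)) :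
    C(K, 𝕜) →ₗ[𝕜] C(X, E) where
  toFun a := ⟨fun t ↦ a (γ t).1 • ((γ t).2 : E), by fun_prop⟩
  map_add' a b := by ext t; exact add_smul _ _ _
  map_smul' c a := by ext t; exact mul_smul _ _ _

theorem range_scaledCurve [NormedField 𝕜] [NormedSpace 𝕜 E] [CompactSpace K] [Nonempty K]
    {γ : C(X, K × closedBall (0 : E) 1)} (hγ : Function.Surjective γ) (a : C(K, 𝕜)) :
    range (scaledCurve γ a) = closedBall 0 ‖a‖ := calc
  range (scaledCurve γ a)
  _ = range fun z : K × closedBall (0 : E) 1 ↦ a z.1 • (z.2 : E) :=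
    hγ.range_comp fun z ↦ a z.1 • (z.2 : E)
  _ = ⋃ s, a s • closedBall (0 : E) 1 := by
    ext p
    simp [mem_smul_set]
  _ = ⋃ s, closedBall (0 : E) ‖a s‖ := by simp only [smul_unitClosedBall]
  _ = closedBall 0 ‖a‖ := iUnion_closedBall_norm_apply a

variable [RCLike 𝕜] [NormedSpace 𝕜 E]

theorem norm_scaledCurve [CompactSpace X] [CompactSpace K] [Nonempty K] [Nontrivial E]
    {γ : C(X, K × closedBall (0 : E) 1)} (hγ : Function.Surjective γ) (a : C(K, 𝕜)) :
    ‖scaledCurve γ a‖ = ‖a‖ :=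
  let := NormedSpace.restrictScalars ℝ 𝕜 E
  norm_eq_of_range_eq_closedBall (norm_nonneg a) (range_scaledCurve hγ a)

end ScaledCurve

theorem spaceFilling_spaceable_general (𝕜 X E : Type*) [RCLike 𝕜] [TopologicalSpace X]
    [CompactSpace X] [PolishSpace X] [Uncountable X] [NormedAddCommGroup E] [NormedSpace 𝕜 E]
    [FiniteDimensional 𝕜 E] [Nontrivial E] :
    ∃ M : Submodule 𝕜 C(X, E), IsClosed (M : Set C(X, E)) ∧ ¬ FiniteDimensional 𝕜 M ∧
      ∀ f ∈ M, range f = closedBall 0 ‖f‖ := by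
  have : ProperSpace E := FiniteDimensional.proper_rclike 𝕜 E
  have : Nonempty (closedBall (0 : E) 1) := (nonempty_closedBall.2 zero_le_one).to_subtype
  have : Nonempty (closedBall (0 : 𝕜) 1) := (nonempty_closedBall.2 zero_le_one).to_subtype
  obtain ⟨γ, hγ⟩ :=
    exists_continuousMap_surjective X (closedBall (0 : 𝕜) 1 × closedBall (0 : E) 1)
  let T : C(closedBall (0 : 𝕜) 1, 𝕜) →ₗᵢ[𝕜] C(X, E) := ⟨scaledCurve γ, norm_scaledCurve hγ⟩
  refine ⟨T.toLinearMap.range, T.isometry.isClosedEmbedding.isClosed_range, fun _ ↦ ?_, ?_⟩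
  · exact not_finiteDimensional_continuousMap
      (infinite_of_mem_nhds (0 : 𝕜) (closedBall_mem_nhds 0 one_pos))
      (LinearEquiv.ofInjective T.toLinearMap T.injective).symm.finiteDimensional
  · rintro _ ⟨a, rfl⟩
    rw [LinearIsometry.coe_toLinearMap, T.norm_map]
    exact range_scaledCurve hγ a

theorem spaceFilling_spaceable :
    ∃ M : Submodule ℝ C(unitInterval, ℝ × ℝ),
      IsClosed (M : Set C(unitInterval, ℝ × ℝ)) ∧
      ¬ FiniteDimensional ℝ M ∧
      ∀ f ∈ M, f ≠ 0 → f ∈ SpaceFilling := by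
  have : Uncountable unitInterval := by
    rw [← not_countable_iff, countable_coe_iff, Cardinal.Real.Icc_countable_iff]
    norm_num
  obtain ⟨M, hM_closed, hM_dim, hM⟩ := spaceFilling_spaceable_general ℝ unitInterval (ℝ × ℝ)
  exact ⟨M, hM_closed, hM_dim, fun f hf hf₀ ↦
    mem_spaceFilling_of_range_eq_closedBall (norm_pos_iff.2 hf₀) (hM f hf)⟩
end

section
/- The family 𝒮ℱ of space-filling curves is dense in the Banach space C(I,ℝ²) with the supremum norm. -/
/-! Cut a curve into finitely many pieces, each of which stays within `r` of its starting point,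
and replace every piece by a path with the same endpoints that runs through the whole closed ball
of radius `r` about that starting point. Such a path exists because the ball is a continuous image
of the Cantor set, and this surjection extends to the interval by Tietze's theorem. The new curve is
`2 * r`-close to the old one, and its image is a finite union of closed balls, hence has null
boundary and nonempty interior. -/

open MeasureTheory Metric Set Topology unitInterval Uniformity

section SurjectivePath

variable {X : Type*} [TopologicalSpace X] [TietzeExtension.{0} X]

theorem joined_of_tietzeExtension (x y : X) : Joined x y := by
  let ends : Bool → I := fun b ↦ bif b then 1 else 0
  have ends_closedEmbedding : IsClosedEmbedding ends :=
    (continuous_of_discreteTopology (f := ends)).isClosedEmbedding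
      (by simp [ends, Function.Injective])
  obtain ⟨g, hg⟩ := ContinuousMap.exists_extension' ends_closedEmbedding
    (⟨fun b ↦ bif b then y else x, continuous_of_discreteTopology⟩ : C(Bool, X))
  exact ⟨⟨g, congr_fun hg false, congr_fun hg true⟩⟩

theorem exists_isClosedEmbedding_nat_bool_unitInterval :
    ∃ e : (ℕ → Bool) → I, IsClosedEmbedding e :=
  ⟨_, ((continuous_inclusion cantorSet_subset_unitInterval).comp
    cantorSetHomeomorphNatToBool.symm.continuous).isClosedEmbedding
    ((inclusion_injective cantorSet_subset_unitInterval).comp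
      cantorSetHomeomorphNatToBool.symm.injective)⟩

theorem exists_path_surjective [CompactSpace X] [TopologicalSpace.MetrizableSpace X] (x y : X) :
    ∃ γ : Path x y, Function.Surjective γ := by
  let := TopologicalSpace.metrizableSpaceMetric X
  have : Nonempty X := ⟨x⟩
  obtain ⟨h, h_cont, h_surj⟩ := exists_nat_bool_continuous_surjective_of_compact X
  obtain ⟨e, he⟩ := exists_isClosedEmbedding_nat_bool_unitInterval
  obtain ⟨g, hg⟩ := ContinuousMap.exists_extension' he ⟨h, h_cont⟩
  have g_surj : Function.Surjective g := .of_comp (g := e) (hg ▸ h_surj)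
  let γ : Path (g 0) (g 1) := ⟨g, rfl, rfl⟩
  refine ⟨((joined_of_tietzeExtension x (g 0)).somePath.trans γ).trans
    (joined_of_tietzeExtension (g 1) y).somePath, range_eq_univ.mp ?_⟩
  have γ_range : range γ = univ := g_surj.range_eq
  simp [Path.trans_range, γ_range]

end SurjectivePath

theorem exists_path_range_eq_closedBall {E : Type*} [NormedAddCommGroup E] [NormedSpace ℝ E]
    [FiniteDimensional ℝ E] {c x y : E} {r : ℝ} (hr : 0 < r)
    (hx : x ∈ closedBall c r) (hy : y ∈ closedBall c r) :
    ∃ γ : Path x y, range γ = closedBall c r := by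
  have := FiniteDimensional.proper ℝ E
  have := instTietzeExtensionClosedBall.{0} ℝ c hr
  obtain ⟨γ, hγ⟩ := exists_path_surjective (⟨x, hx⟩ : closedBall c r) ⟨y, hy⟩
  refine ⟨γ.map continuous_subtype_val, ?_⟩
  rw [Path.map_coe, hγ.range_comp, Subtype.range_coe]

section Bisection

theorem dist_convexComb_convexComb {a b : ℝ} (x y : Icc a b) (s t : I) :
    dist (Icc.convexComb x y s) (Icc.convexComb x y t) = dist (s : ℝ) t * dist x y := by
  simp only [Subtype.dist_eq, Icc.coe_convexComb, Real.dist_eq, ← abs_mul]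
  rw [abs_eq_abs]
  right
  ring

theorem midpoint_induction {a b : ℝ} {P : Icc a b → Icc a b → Prop} {δ : ℝ} (hδ : 0 < δ) {h : I}
    (hh : (h : ℝ) = 1 / 2) (small : ∀ s t, dist s t < δ → P s t)
    (midpoint : ∀ s t, P s (Icc.convexComb s t h) → P (Icc.convexComb s t h) t → P s t)
    (s t : Icc a b) : P s t := by
  have bisect (n : ℕ) : ∀ s t, dist s t < 2 ^ n * δ → P s t := by
    induction n with
    | zero => simpa using small
    | succ n ih =>
      intro s t hst
      have dist_left : dist s (Icc.convexComb s t h) = 1 / 2 * dist s t := by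
        simpa [hh] using dist_convexComb_convexComb s t 0 h
      have dist_right : dist (Icc.convexComb s t h) t = 1 / 2 * dist s t := by
        have half_sub_one : |(2⁻¹ - 1 : ℝ)| = 2⁻¹ := by norm_num
        simpa [hh, Real.dist_eq, half_sub_one] using dist_convexComb_convexComb s t h 1
      rw [pow_succ] at hst
      exact midpoint s t (ih _ _ (by linarith)) (ih _ _ (by linarith))
  obtain ⟨n, hn⟩ := pow_unbounded_of_one_lt (dist s t / δ) one_lt_two
  exact bisect n s t ((div_lt_iff₀ hδ).mp hn)

variable {X : Type*} {x y : X}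

theorem subpath_trans_subpath_midpoint [TopologicalSpace X] (γ : Path x y) (s t : I) {h : I}
    (hh : (h : ℝ) = 1 / 2) :
    (γ.subpath s (Icc.convexComb s t h)).trans (γ.subpath (Icc.convexComb s t h) t) =
      γ.subpath s t := by
  ext u
  simp only [Path.trans_apply]
  split_ifs <;> refine congr_arg γ (Subtype.ext ?_) <;> simp only [Icc.coe_convexComb, hh] <;> ring

theorem path_trans_induction [UniformSpace X] {P : ∀ {x y : X}, Path x y → Prop}
    {V : SetRel X X} (hV : V ∈ 𝓤 X)
    (small : ∀ {x y : X} (γ : Path x y), (∀ s t, (γ s, γ t) ∈ V) → P γ)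
    (trans : ∀ {x y z : X} (γ₁ : Path x y) (γ₂ : Path y z), P γ₁ → P γ₂ → P (γ₁.trans γ₂))
    (γ : Path x y) : P γ := by
  obtain ⟨δ, δ_pos, hδ⟩ := mem_uniformity_dist.mp <|
    Filter.mem_map.mp (CompactSpace.uniformContinuous_of_continuous γ.continuous hV)
  have P_subpath : ∀ s t, P (γ.subpath s t) := by
    let h : I := ⟨1 / 2, by norm_num, by norm_num⟩
    refine midpoint_induction δ_pos (h := h) rfl (fun s t hst ↦ small _ fun u v ↦ hδ ?_)
      fun s t left right ↦ subpath_trans_subpath_midpoint γ s t (h := h) rfl ▸ trans _ _ left right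
    calc dist (Icc.convexComb s t u) (Icc.convexComb s t v)
        = dist (u : ℝ) v * dist s t := dist_convexComb_convexComb s t u v
      _ ≤ dist s t := mul_le_of_le_one_left dist_nonneg (Real.dist_le_of_mem_Icc_01 u.2 v.2)
      _ < δ := hst
  have of_cast {a b : X} (ha : a = x) (hb : b = y) : P (γ.cast ha hb) → P γ := by
    subst ha hb
    exact id
  exact of_cast γ.source γ.target (γ.subpath_zero_one ▸ P_subpath 0 1)

end Bisection

section JordanContent

/-- Jordan measurability (a boundary of measure zero) together with positive Jordan content
(a nonempty interior). The boundedness that Jordan measurability also requires is left out, being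
automatic for images of compact spaces. -/
def HasPositiveJordanContent {E : Type*} [TopologicalSpace E] [MeasurableSpace E] (μ : Measure E)
    (s : Set E) : Prop :=
  μ (frontier s) = 0 ∧ (interior s).Nonempty

theorem HasPositiveJordanContent.union {E : Type*} [TopologicalSpace E] [MeasurableSpace E]
    {μ : Measure E} {s t : Set E} (hs : HasPositiveJordanContent μ s)
    (ht : HasPositiveJordanContent μ t) : HasPositiveJordanContent μ (s ∪ t) := by
  refine ⟨measure_mono_null ?_ (measure_union_null hs.1 ht.1),
    hs.2.mono (interior_mono subset_union_left)⟩
  exact (frontier_union_subset s t).trans (union_subset_union inter_subset_left inter_subset_right)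

variable {E : Type*} [NormedAddCommGroup E] [NormedSpace ℝ E] [FiniteDimensional ℝ E]
  [MeasurableSpace E] [BorelSpace E] (μ : Measure E) [μ.IsAddHaarMeasure]

theorem hasPositiveJordanContent_closedBall (c : E) {r : ℝ} (hr : 0 < r) :
    HasPositiveJordanContent μ (closedBall c r) :=
  ⟨(convex_closedBall c r).addHaar_frontier μ,
    (nonempty_ball.mpr hr).mono ball_subset_interior_closedBall⟩

theorem exists_path_dist_le_hasPositiveJordanContent {r : ℝ} (hr : 0 < r) {x y : E}
    (γ : Path x y) :
    ∃ φ : Path x y, (∀ t, dist (φ t) (γ t) ≤ 2 * r) ∧ HasPositiveJordanContent μ (range φ) := by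
  refine path_trans_induction (P := fun {x y} γ ↦ ∃ φ : Path x y, (∀ t, dist (φ t) (γ t) ≤ 2 * r) ∧
    HasPositiveJordanContent μ (range φ)) (dist_mem_uniformity hr) ?_ ?_ γ
  · intro x y γ hγ
    have γ_mem (t : I) : γ t ∈ closedBall x r := by
      have dist_lt : dist (γ t) (γ 0) < r := hγ t 0
      simpa using dist_lt.le
    obtain ⟨φ, hφ⟩ := exists_path_range_eq_closedBall hr (mem_closedBall_self hr.le)
      (γ.target ▸ γ_mem 1)
    refine ⟨φ, fun t ↦ ?_, hφ ▸ hasPositiveJordanContent_closedBall μ x hr⟩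
    have φ_mem : φ t ∈ closedBall x r := hφ ▸ mem_range_self t
    exact (dist_le_diam_of_mem isBounded_closedBall φ_mem (γ_mem t)).trans (diam_closedBall hr.le)
  · rintro x y z γ₁ γ₂ ⟨φ₁, dist₁, content₁⟩ ⟨φ₂, dist₂, content₂⟩
    refine ⟨φ₁.trans φ₂, fun t ↦ ?_, Path.trans_range φ₁ φ₂ ▸ content₁.union content₂⟩
    rw [Path.trans_apply, Path.trans_apply]
    split_ifs
    exacts [dist₁ _, dist₂ _]

theorem spaceFilling_dense_general :
    Dense {φ : C(I, E) | HasPositiveJordanContent μ (range φ)} := by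
  rw [Metric.dense_iff]
  intro f ε hε
  obtain ⟨φ, hφ, content⟩ := exists_path_dist_le_hasPositiveJordanContent μ
    (r := ε / 3) (by positivity) (⟨f, rfl, rfl⟩ : Path (f 0) (f 1))
  refine ⟨φ, ?_, content⟩
  calc dist (φ : C(I, E)) f ≤ 2 * (ε / 3) := (ContinuousMap.dist_le (by positivity)).mpr hφ
    _ < ε := by linarith

end JordanContent

theorem spaceFilling_dense : Dense SpaceFilling :=
  spaceFilling_dense_general volume
end

section
/- Let 𝒯𝒮ℱ₁ = {φ ∈ C(I,ℝ²) : for every neighborhood U of 1 in I, the interior of φ(U) in ℝ² is nonempty}. Then 𝒯𝒮ℱ₁ is spaceable in C(I,ℝ²): there exists a closed, infinite-dimensional linear subspace M of the Banach space C(I,ℝ²) such that every nonzero element of M belongs to 𝒯𝒮ℱ₁. -/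
/-- The family of curves `φ` such that `φ(U)` has nonempty interior for every
neighborhood `U` of `1` in `I`. -/
def TSF1 : Set C(unitInterval, ℝ × ℝ) :=
  {φ | ∀ U ∈ nhds (1 : unitInterval), (interior (⇑φ '' U)).Nonempty}

/-!
Peano-type curves onto infinite products of balls give a sequence `v i` of curves in the unit ball
of `C(I, E)` such that near `1` the values `v i t`, `i : ℕ`, can be prescribed simultaneously and
arbitrarily, as long as they are uniformly small. On `ℓ¹` put `T a = ∑' i, a i • v i`. Prescribing
`v i t = sign (a i) • w` gives `T a t = ‖a‖ • w`, so `T` is bounded below and its range is closed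
and infinite-dimensional. If `a j ≠ 0`, prescribing `v j t = (a j)⁻¹ • y` and `v i t = 0` for
`i ≠ j` gives `T a t = y` with `t` near `1`, so `T a` maps neighborhoods of `1` to neighborhoods
of `0`.
-/

open Filter Function Set Metric Topology unitInterval
open scoped ENNReal lp

section PeriodicSurjection

variable (K : Type*) [TopologicalSpace K] [CompactSpace K] [TopologicalSpace.MetrizableSpace K]
  [Nonempty K] [TietzeExtension.{0} K]

theorem exists_continuousMap_real_image_Icc_eq_univ :
    ∃ g : C(ℝ, K), g '' Icc 0 1 = univ := by
  let : MetricSpace K := TopologicalSpace.metrizableSpaceMetric K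
  obtain ⟨f, hf, hf_surj⟩ := exists_nat_bool_continuous_surjective_of_compact K
  let e := cantorSetHomeomorphNatToBool
  obtain ⟨g, hg⟩ := ContinuousMap.exists_restrict_eq isClosed_cantorSet
    ⟨f ∘ e, hf.comp e.continuous⟩
  refine ⟨g, eq_univ_of_forall fun y ↦ ?_⟩
  obtain ⟨b, rfl⟩ := hf_surj y
  exact ⟨e.symm b, cantorSet_subset_unitInterval (e.symm b).2,
    by simpa using DFunLike.congr_fun hg (e.symm b)⟩

theorem exists_periodic_continuous_surjective :
    ∃ h : ℝ → K, Continuous h ∧ Periodic h (2 * Real.pi) ∧ Surjective h := by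
  obtain ⟨g, hg⟩ := exists_continuousMap_real_image_Icc_eq_univ K
  refine ⟨g ∘ Real.sin, by fun_prop, Real.sin_periodic.comp g, fun y ↦ ?_⟩
  obtain ⟨s, ⟨hs₀, hs₁⟩, rfl⟩ := hg.symm ▸ mem_univ y
  exact ⟨Real.arcsin s, by simp [Real.sin_arcsin (by linarith) hs₁]⟩

end PeriodicSurjection

section FillsCubes

variable {ι E X Y : Type*} [NormedAddCommGroup E]

/-- `Γ : X → ι → E` fills cubes along a filter `l` if the image of every `U ∈ l` contains some
`ι`-fold product of closed balls of a common positive radius around `0`. -/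
def FillsCubes (Γ : X → ι → E) (l : Filter X) : Prop :=
  ∀ U ∈ l, ∃ r > 0, {x | ∀ i, ‖x i‖ ≤ r} ⊆ Γ '' U

theorem FillsCubes.mono {Γ : X → ι → E} {l l' : Filter X} (hΓ : FillsCubes Γ l) (h : l ≤ l') :
    FillsCubes Γ l' :=
  fun U hU ↦ hΓ U (h hU)

theorem FillsCubes.comp {Γ : X → ι → E} {g : Y → X} {l : Filter Y} (hΓ : FillsCubes Γ (map g l)) :
    FillsCubes (Γ ∘ g) l := fun U hU ↦ by
  simpa only [image_comp] using hΓ (g '' U) (image_mem_map hU)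

variable [NormedSpace ℝ E]

/-- The curve `t ↦ min |t| σ • y`, where `(σ, y) = h (1 / t)`. The factor `|t|` makes it continuous
at `0` even though `h (1 / t)` oscillates there; the cutoff `σ`, running through `[0, 1]`
independently of `y`, lets a point `σ • y` be reached exactly at any time `t` with `σ ≤ |t|`. -/
noncomputable def taperedCurve (h : ℝ → I × (ι → closedBall (0 : E) 1)) (t : ℝ) (i : ι) : E :=
  (min |t| (h t⁻¹).1 : ℝ) • ((h t⁻¹).2 i : E)

variable (h : ℝ → I × (ι → closedBall (0 : E) 1))

theorem norm_taperedCurve_le (t : ℝ) (i : ι) : ‖taperedCurve h t i‖ ≤ min |t| 1 := by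
  have hσ : 0 ≤ min |t| ((h t⁻¹).1 : ℝ) := le_min (abs_nonneg t) (h t⁻¹).1.2.1
  calc ‖taperedCurve h t i‖ = min |t| (h t⁻¹).1 * ‖((h t⁻¹).2 i : E)‖ := by
        rw [taperedCurve, norm_smul, Real.norm_of_nonneg hσ]
    _ ≤ min |t| (h t⁻¹).1 :=
        mul_le_of_le_one_right hσ (mem_closedBall_zero_iff.mp ((h t⁻¹).2 i).2)
    _ ≤ min |t| 1 := min_le_min_left _ (h t⁻¹).1.2.2

variable {h}

theorem continuous_taperedCurve (hh : Continuous h) : Continuous (taperedCurve h) := by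
  refine continuous_pi fun i ↦ continuous_iff_continuousAt.mpr fun t ↦ ?_
  rcases eq_or_ne t 0 with rfl | ht
  · have h₀ : taperedCurve h 0 i = 0 := by
      simpa using norm_taperedCurve_le h 0 i
    rw [ContinuousAt, h₀]
    exact squeeze_zero_norm (fun s ↦ (norm_taperedCurve_le h s i).trans (min_le_left _ _))
      (by simpa using (continuous_abs (G := ℝ)).tendsto 0)
  · unfold taperedCurve
    fun_prop (disch := assumption)

theorem fillsCubes_taperedCurve {c : ℝ} (hc : 0 < c) (hper : Periodic h c) (hsurj : Surjective h) :
    FillsCubes (taperedCurve h) (𝓝[>] 0) := by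
  intro U hU
  obtain ⟨ε, hε, hεU⟩ := mem_nhdsGT_iff_exists_Ioo_subset.mp hU
  rw [mem_Ioi] at hε
  set N : ℝ := max 1 ε⁻¹
  have hN : 1 ≤ N := le_max_left _ _
  set r : ℝ := (N + c)⁻¹
  have hr : 0 < r := by positivity
  have hr₁ : r ≤ 1 := inv_le_one_of_one_le₀ (by linarith)
  refine ⟨r, hr, fun x hx ↦ ?_⟩
  have hball (i : ι) : r⁻¹ • x i ∈ closedBall (0 : E) 1 := by
    rw [mem_closedBall_zero_iff, norm_smul, norm_inv, Real.norm_of_nonneg hr.le]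
    exact inv_mul_le_one_of_le₀ (hx i) hr.le
  obtain ⟨θ, ⟨hNθ, hθ⟩, hhθ⟩ : (⟨r, hr.le, hr₁⟩, fun i ↦ ⟨r⁻¹ • x i, hball i⟩) ∈
      h '' Ioc N (N + c) := by
    rw [hper.image_Ioc hc]
    exact hsurj _
  have hθ₀ : 0 < θ := by linarith
  have hmin : min |θ⁻¹| r = r := by
    rw [abs_of_pos (inv_pos.mpr hθ₀)]
    exact min_eq_right (inv_anti₀ hθ₀ hθ)
  refine ⟨θ⁻¹, hεU ⟨inv_pos.mpr hθ₀, ?_⟩, funext fun i ↦ ?_⟩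
  · exact inv_lt_of_inv_lt₀ hε ((le_max_right _ _).trans_lt hNθ)
  · simp only [taperedCurve, inv_inv, hhθ, hmin, smul_inv_smul₀ hr.ne']

theorem exists_continuous_fillsCubes (ι E : Type*) [Countable ι] [NormedAddCommGroup E]
    [NormedSpace ℝ E] [FiniteDimensional ℝ E] :
    ∃ Γ : ℝ → ι → E, Continuous Γ ∧ (∀ t i, ‖Γ t i‖ ≤ 1) ∧ FillsCubes Γ (𝓝[>] 0) := by
  have : ProperSpace E := FiniteDimensional.proper_real E
  have : CompactSpace (closedBall (0 : E) 1) :=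
    isCompact_iff_compactSpace.mp (isCompact_closedBall _ _)
  have : Nonempty (closedBall (0 : E) 1) := ⟨0, mem_closedBall_self zero_le_one⟩
  have : TietzeExtension.{0} (closedBall (0 : E) 1) := instTietzeExtensionClosedBall ℝ 0 one_pos
  obtain ⟨h, hh, hper, hsurj⟩ :=
    exists_periodic_continuous_surjective (I × (ι → closedBall (0 : E) 1))
  exact ⟨taperedCurve h, continuous_taperedCurve hh,
    fun t i ↦ (norm_taperedCurve_le h t i).trans (min_le_right _ _),
    fillsCubes_taperedCurve Real.two_pi_pos hper hsurj⟩

end FillsCubes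

section Synthesis

variable {ι 𝕜 F : Type*} [NormedAddCommGroup F]

theorem hasSum_norm_lp_one (a : ℓ¹(ι, F)) : HasSum (fun i ↦ ‖a i‖) ‖a‖ := by
  simpa using lp.hasSum_norm (by simp) a

variable [RCLike 𝕜] [NormedSpace 𝕜 F] [CompleteSpace F]

/-- The operator `a ↦ ∑' i, a i • v i` from `ℓ¹` to a Banach space `F` determined by a bounded
family `v` in `F`. -/
noncomputable def synthesis (v : ℓ^∞(ι, F)) : ℓ¹(ι, 𝕜) →L[𝕜] F :=
  (lp.dualPairing 1 ∞ (fun _ ↦ ContinuousLinearMap.lsmul 𝕜 𝕜) (K := 1)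
    fun _ ↦ ContinuousLinearMap.opNorm_lsmul_le).flip v

theorem summable_lp_one_smul_lp_infty (v : ℓ^∞(ι, F)) (a : ℓ¹(ι, 𝕜)) :
    Summable fun i ↦ a i • v i :=
  .of_norm_bounded ((hasSum_norm_lp_one a).summable.mul_right ‖v‖) fun i ↦ by
    rw [norm_smul]
    gcongr
    exact lp.norm_apply_le_norm (by simp) v i

theorem hasSum_synthesis (v : ℓ^∞(ι, F)) (a : ℓ¹(ι, 𝕜)) :
    HasSum (fun i ↦ a i • v i) (synthesis v a) :=
  (summable_lp_one_smul_lp_infty v a).hasSum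

theorem not_finiteDimensional_lp (ι 𝕜 : Type*) [Infinite ι] [NormedField 𝕜] (p : ℝ≥0∞) :
    ¬ FiniteDimensional 𝕜 (lp (fun _ : ι ↦ 𝕜) p) := by
  classical
  intro _
  have hli : LinearIndependent 𝕜 fun i ↦ (lp.single p i 1 : lp (fun _ : ι ↦ 𝕜) p) := by
    refine .of_comp (LinearMap.pi (lp.evalₗ (fun _ : ι ↦ 𝕜) p)) ?_
    exact Pi.linearIndependent_single_one ι 𝕜
  exact not_finite_iff_infinite.mpr inferInstance hli.finite

end Synthesis

section FillsCubesSynthesis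

variable {ι X E : Type*} [TopologicalSpace X] [CompactSpace X] [NormedAddCommGroup E]
  [NormedSpace ℝ E] [CompleteSpace E] {v : ℓ^∞(ι, C(X, E))} {l : Filter X}

theorem hasSum_synthesis_apply (v : ℓ^∞(ι, C(X, E))) (a : ℓ¹(ι, ℝ)) (t : X) :
    HasSum (fun i ↦ a i • v i t) (synthesis v a t) :=
  ContinuousMap.hasSum_apply (hasSum_synthesis v a) t

theorem FillsCubes.exists_antilipschitzWith_synthesis [Nontrivial E]
    (hv : FillsCubes (fun t i ↦ v i t) l) :
    ∃ K, AntilipschitzWith K (synthesis v : ℓ¹(ι, ℝ) →L[ℝ] C(X, E)) := by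
  obtain ⟨r, hr, hcube⟩ := hv univ univ_mem
  obtain ⟨w, hw⟩ := exists_norm_eq E hr.le
  refine ⟨⟨r⁻¹, by positivity⟩, ContinuousLinearMap.antilipschitz_of_bound _ fun a ↦ ?_⟩
  obtain ⟨t, -, hvt⟩ : (fun i ↦ (SignType.sign (a i) : ℝ) • w) ∈ (fun t i ↦ v i t) '' univ := by
    refine hcube fun i ↦ ?_
    rcases lt_trichotomy (a i) 0 with h | h | h <;> simp [h, hw, hr.le]
  have hvt_apply (i : ι) : v i t = (SignType.sign (a i) : ℝ) • w := congrFun hvt i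
  have hsum : HasSum (fun i ↦ a i • v i t) (‖a‖ • w) := by
    convert (hasSum_norm_lp_one a).smul_const w using 2 with i
    rw [hvt_apply, smul_smul, self_mul_sign, Real.norm_eq_abs]
  have hle : ‖a‖ * r ≤ ‖synthesis v a‖ := by
    calc ‖a‖ * r = ‖synthesis v a t‖ := by
          rw [(hasSum_synthesis_apply v a t).unique hsum, norm_smul, norm_norm, hw]
      _ ≤ ‖synthesis v a‖ := ContinuousMap.norm_coe_le_norm _ t
  exact (le_inv_mul_iff₀' hr).mpr hle

theorem FillsCubes.image_synthesis_mem_nhds_zero (hv : FillsCubes (fun t i ↦ v i t) l)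
    {a : ℓ¹(ι, ℝ)} (ha : a ≠ 0) {U : Set X} (hU : U ∈ l) : synthesis v a '' U ∈ 𝓝 0 := by
  classical
  obtain ⟨j, hj⟩ : ∃ j, a j ≠ 0 := by
    by_contra! h
    exact ha (lp.ext (funext h))
  obtain ⟨r, hr, hcube⟩ := hv U hU
  have hpos : 0 < ‖a j‖ * r := by positivity
  refine mem_of_superset (closedBall_mem_nhds 0 hpos) fun y hy ↦ ?_
  rw [mem_closedBall_zero_iff] at hy
  obtain ⟨t, htU, hvt⟩ : Pi.single j ((a j)⁻¹ • y) ∈ (fun t i ↦ v i t) '' U := by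
    refine hcube fun i ↦ ?_
    rcases eq_or_ne i j with rfl | hij
    · rwa [Pi.single_eq_same, norm_smul, norm_inv, inv_mul_le_iff₀ (by positivity)]
    · simpa [hij] using hr.le
  have hvt_apply (i : ι) : v i t = Pi.single (M := fun _ ↦ E) j ((a j)⁻¹ • y) i := congrFun hvt i
  refine ⟨t, htU, (hasSum_synthesis_apply v a t).unique ?_⟩
  convert hasSum_single j fun i hij ↦ ?_ using 1
  · rw [hvt_apply, Pi.single_eq_same, smul_inv_smul₀ hj]
  · rw [hvt_apply, Pi.single_eq_of_ne hij, smul_zero]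

end FillsCubesSynthesis

theorem unitInterval_nhdsGT_zero_le_map_one_sub :
    𝓝[>] (0 : ℝ) ≤ map (fun t : I ↦ 1 - (t : ℝ)) (𝓝 1) := by
  refine le_map_of_right_inverse (mba := fun s ↦ projIcc 0 1 zero_le_one (1 - s)) ?_ ?_
  · filter_upwards [Ioo_mem_nhdsGT (zero_lt_one' ℝ)] with s hs
    simp [projIcc_of_mem zero_le_one (x := 1 - s) ⟨by linarith [hs.2], by linarith [hs.1]⟩]
  · have hcont : Continuous fun s : ℝ ↦ projIcc 0 1 (zero_le_one' ℝ) (1 - s) := by fun_prop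
    exact (hcont.tendsto' 0 1 (by simp)).mono_left nhdsWithin_le_nhds

theorem exists_lp_infty_fillsCubes_nhds_one (ι E : Type*) [Countable ι] [NormedAddCommGroup E]
    [NormedSpace ℝ E] [FiniteDimensional ℝ E] :
    ∃ v : ℓ^∞(ι, C(I, E)), FillsCubes (fun t i ↦ v i t) (𝓝 1) := by
  obtain ⟨Γ, hΓ, hΓ_le, hΓ_fills⟩ := exists_continuous_fillsCubes ι E
  let v (i : ι) : C(I, E) := ⟨fun t ↦ Γ (1 - t) i, by fun_prop⟩
  have hv : Memℓp v ∞ := memℓp_infty ⟨1, forall_mem_range.mpr fun i ↦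
    (ContinuousMap.norm_le _ zero_le_one).mpr fun t ↦ hΓ_le _ i⟩
  exact ⟨⟨v, hv⟩, (hΓ_fills.mono unitInterval_nhdsGT_zero_le_map_one_sub).comp⟩

theorem TSF1_spaceable_general (E : Type*) [NormedAddCommGroup E] [NormedSpace ℝ E]
    [FiniteDimensional ℝ E] [Nontrivial E] :
    ∃ M : Submodule ℝ C(I, E), IsClosed (M : Set C(I, E)) ∧ ¬ FiniteDimensional ℝ M ∧
      ∀ f ∈ M, f ≠ 0 → ∀ U ∈ 𝓝 (1 : I), f '' U ∈ 𝓝 0 := by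
  have : CompleteSpace E := FiniteDimensional.complete ℝ E
  obtain ⟨v, hv⟩ := exists_lp_infty_fillsCubes_nhds_one ℕ E
  obtain ⟨K, hK⟩ := hv.exists_antilipschitzWith_synthesis
  let T : ℓ¹(ℕ, ℝ) →L[ℝ] C(I, E) := synthesis v
  refine ⟨T.range, ?_, fun _ ↦ ?_, ?_⟩
  · exact hK.isClosed_range T.uniformContinuous
  · have e := LinearEquiv.ofInjective T.toLinearMap hK.injective
    exact not_finiteDimensional_lp ℕ ℝ 1 e.symm.finiteDimensional
  · rintro _ ⟨a, rfl⟩ ha U hU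
    exact hv.image_synthesis_mem_nhds_zero (ne_zero_of_map ha) hU

theorem TSF1_spaceable :
    ∃ M : Submodule ℝ C(unitInterval, ℝ × ℝ),
      IsClosed (M : Set C(unitInterval, ℝ × ℝ)) ∧
      ¬ FiniteDimensional ℝ M ∧
      ∀ f ∈ M, f ≠ 0 → f ∈ TSF1 := by
  obtain ⟨M, hclosed, hinf, hM⟩ := TSF1_spaceable_general (ℝ × ℝ)
  exact ⟨M, hclosed, hinf, fun f hf hf₀ U hU ↦
    ⟨0, mem_interior_iff_mem_nhds.mpr (hM f hf hf₀ U hU)⟩⟩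
end

section
/- The family 𝒯𝒮ℱ of topologically space-filling curves is maximal dense-lineable in C(I,ℝ²): there exists a dense linear subspace M of the Banach space C(I,ℝ²) with dimension 𝔠, the cardinality of the continuum (which equals the dimension of C(I,ℝ²)), such that every nonzero element of M belongs to 𝒯𝒮ℱ. -/
/-- A continuous map `φ : I → ℝ²` is a topologically space-filling curve if the
interior of its image is nonempty. -/
def TopSpaceFilling : Set C(unitInterval, ℝ × ℝ) :=
  {φ | (interior (Set.range ⇑φ)).Nonempty}

/-!
A compact uncountable Polish space `X` maps continuously onto the cube `B ^ ℕ`, where `B` is the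
closed unit ball of `E`: `X` contains a Cantor set, the Cantor set surjects onto `B ^ ℕ`, and Tietze
extends the surjection to `Q : X → B ^ ℕ`. By Baire, some `x₀ : X` is such that `Q` sends each of
its neighbourhoods onto a set with nonempty interior. For `w ∈ ℓ¹` let `T w := ∑ₖ wₖ Qₖ`. If
`wₖ ≠ 0`, moving the `k`-th coordinate alone already makes `∑ wₖ yₖ` fill an open set, so `T w`
covers an open set near `x₀`, and so does `p + T w` whenever `p` is constant near `x₀`. Such `p` are
dense in `C(X, E)`, hence a linear `S` with values in them can be chosen so that the range of
`S + T` is dense. This range is the required subspace: it is linearly isomorphic to `ℓ¹`, which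
has dimension `𝔠`.
-/

open Cardinal Filter Metric Set TopologicalSpace Topology
open scoped Pointwise lp

universe u v w

section Cardinality

theorem mk_le_continuum_of_secondCountable (X : Type*) [TopologicalSpace X] [T0Space X]
    [SecondCountableTopology X] : #X ≤ 𝔠 := by
  have hinj : Function.Injective fun (x : X) ↦ {U : countableBasis X | x ∈ U.1} := fun x y hxy ↦
    ((isBasis_countableBasis X).inseparable_iff.2 fun U hU ↦ Set.ext_iff.1 hxy ⟨U, hU⟩).eq
  calc #X ≤ #(Set (countableBasis X)) := mk_le_of_injective hinj
    _ = 2 ^ #(countableBasis X) := mk_set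
    _ ≤ 2 ^ ℵ₀ := power_le_power_left two_ne_zero (countable_countableBasis X).le_aleph0
    _ = 𝔠 := two_power_aleph0

theorem linearIndependent_geometric (R : Type*) [CommRing R] [IsDomain R] :
    LinearIndependent R fun (a : R) (k : ℕ) ↦ a ^ k :=
  (linearIndependent_monoidHom (Multiplicative ℕ) R).comp (powersHom R) (powersHom R).injective

theorem continuum_le_rank_lp_one : 𝔠 ≤ Module.rank ℝ ℓ¹(ℕ, ℝ) := by
  let coeFn : ℓ¹(ℕ, ℝ) →ₗ[ℝ] ℕ → ℝ :=
    { toFun := (⇑), map_add' := lp.coeFn_add, map_smul' := lp.coeFn_smul }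
  have memℓp_geometric (a : Ioo (0 : ℝ) 1) : Memℓp (fun k : ℕ ↦ (a : ℝ) ^ k) 1 := by
    refine memℓp_gen ?_
    simpa [abs_of_pos a.2.1] using summable_geometric_of_lt_one a.2.1.le a.2.2
  have hli : LinearIndependent ℝ fun a ↦ (⟨_, memℓp_geometric a⟩ : ℓ¹(ℕ, ℝ)) :=
    .of_comp coeFn ((linearIndependent_geometric ℝ).comp _ Subtype.val_injective)
  simpa [mk_Ioo_real zero_lt_one] using hli.cardinal_le_rank

end Cardinality

section Perturbation

variable {𝕜 : Type u} {V : Type v} {W : Type w} [NontriviallyNormedField 𝕜]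
  [AddCommGroup V] [Module 𝕜 V] [TopologicalSpace V] [ContinuousAdd V] [ContinuousSMul 𝕜 V]
  [SecondCountableTopology V] [AddCommGroup W] [Module 𝕜 W]

theorem exists_linearMap_denseRange_add {F : Submodule 𝕜 V} (hF : Dense (F : Set V))
    (hW : ℵ₀ ≤ Module.rank 𝕜 W) (T : W →ₗ[𝕜] V) :
    ∃ S : W →ₗ[𝕜] F, DenseRange (F.subtype ∘ₗ S + T) := by
  let b := Module.Free.chooseBasis 𝕜 W
  have : Infinite (Module.Free.ChooseBasisIndex 𝕜 W) := by
    rwa [infinite_iff, ← Module.Free.rank_eq_card_chooseBasisIndex]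
  have := (countable_countableBasis V).to_subtype
  obtain ⟨n, hn⟩ := exists_injective_nat (countableBasis V)
  let j : countableBasis V → Module.Free.ChooseBasisIndex 𝕜 W := Infinite.natEmbedding _ ∘ n
  have hj : Function.Injective j := (Infinite.natEmbedding _).injective.comp hn
  have happrox (U : countableBasis V) : ∃ (p : F) (δ : 𝕜), δ ≠ 0 ∧ p + δ • T (b (j U)) ∈ U.1 := by
    have hU : IsOpen U.1 := isOpen_of_mem_countableBasis U.2
    obtain ⟨p, hpU, hpF⟩ := hF.inter_open_nonempty U hU (nonempty_of_mem_countableBasis U.2)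
    have htendsto : Tendsto (fun δ : 𝕜 ↦ p + δ • T (b (j U))) (𝓝[≠] 0) (𝓝 p) :=
      .mono_left (Continuous.tendsto' (by fun_prop) _ _ (by simp)) nhdsWithin_le_nhds
    obtain ⟨δ, hδU, hδ⟩ :=
      ((htendsto.eventually (hU.mem_nhds hpU)).and self_mem_nhdsWithin).exists
    exact ⟨⟨p, hpF⟩, δ, hδ, hδU⟩
  choose p δ hδ hpδ using happrox
  -- `S + T` sends `δ • b (j U)` to `p + δ • T (b (j U)) ∈ U`.
  let S : W →ₗ[𝕜] F := b.constr 𝕜 (Function.extend j (fun U ↦ (δ U)⁻¹ • p U) 0)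
  refine ⟨S, (isBasis_countableBasis V).dense_iff.2 fun U hU _ ↦ ⟨_, hpδ ⟨U, hU⟩, ?_⟩⟩
  have hS : S (b (j ⟨U, hU⟩)) = (δ ⟨U, hU⟩)⁻¹ • p ⟨U, hU⟩ := by
    rw [b.constr_basis, hj.extend_apply]
  exact ⟨δ ⟨U, hU⟩ • b (j ⟨U, hU⟩), by simp [hS, smul_inv_smul₀ (hδ _)]⟩

theorem exists_dense_submodule_forall_mem {F : Submodule 𝕜 V} (hF : Dense (F : Set V))
    (hW : ℵ₀ ≤ Module.rank 𝕜 W) (T : W →ₗ[𝕜] V) {A : Set V} (hA_zero : 0 ∉ A)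
    (hA : ∀ p ∈ F, ∀ w ≠ 0, p + T w ∈ A) :
    ∃ M : Submodule 𝕜 V, Dense (M : Set V) ∧
      lift.{w} (Module.rank 𝕜 M) = lift.{v} (Module.rank 𝕜 W) ∧ ∀ f ∈ M, f ≠ 0 → f ∈ A := by
  obtain ⟨S, hS⟩ := exists_linearMap_denseRange_add hF hW T
  let R := F.subtype ∘ₗ S + T
  have hR (w : W) (hw : w ≠ 0) : R w ∈ A := hA (S w) (S w).2 w hw
  have hR_inj : Function.Injective R := (injective_iff_map_eq_zero R).2 fun w hw ↦
    by_contra fun hne ↦ hA_zero (hw ▸ hR w hne)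
  refine ⟨R.range, by rwa [LinearMap.coe_range], lift_rank_range_of_injective R hR_inj, ?_⟩
  rintro _ ⟨w, rfl⟩ hne
  exact hR w fun hw ↦ hne (by simp [hw])

end Perturbation

theorem exists_continuousMap_surjective_of_uncountable (X : Type u) (Y : Type v)
    [TopologicalSpace X] [PolishSpace X] [Uncountable X] [TopologicalSpace Y]
    [CompactSpace Y] [MetrizableSpace Y] [Nonempty Y] [TietzeExtension.{u} Y] :
    ∃ Q : C(X, Y), Function.Surjective Q := by
  let := metrizableSpaceMetric Y
  obtain ⟨e, -, he, he_inj⟩ :=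
    isClosed_univ.exists_nat_bool_injection_of_not_countable (not_countable_univ (α := X))
  obtain ⟨q, hq, hq_surj⟩ := exists_nat_bool_continuous_surjective_of_compact Y
  obtain ⟨Q, hQ⟩ := ContinuousMap.exists_extension' (he.isClosedEmbedding he_inj) ⟨q, hq⟩
  exact ⟨Q, .of_comp (g := e) (hQ ▸ hq_surj)⟩

theorem exists_forall_mem_nhds_interior_image_nonempty {X Y : Type*} [TopologicalSpace X]
    [CompactSpace X] [RegularSpace X] [TopologicalSpace Y] [T2Space Y] [BaireSpace Y] [Nonempty Y]
    (Q : C(X, Y)) (hQ : Function.Surjective Q) :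
    ∃ x₀, ∀ N ∈ 𝓝 x₀, (interior (Q '' N)).Nonempty := by
  by_contra! h
  choose N hN hN_empty using h
  choose K hK hK_closed hKN using fun x ↦ exists_mem_nhds_isClosed_subset (hN x)
  obtain ⟨s, hs⟩ := CompactSpace.elim_nhds_subcover K hK
  have hcover : ⋃ x ∈ s, Q '' K x = Set.univ := by
    rw [← image_iUnion₂, hs, top_eq_univ, image_univ, hQ.range_eq]
  have hdense := dense_biUnion_interior_of_closed (S := (s : Set X))
    (fun x _ ↦ ((hK_closed x).isCompact.image Q.continuous).isClosed) s.countable_toSet hcover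
  have hK_empty (x : X) : interior (Q '' K x) = ∅ :=
    subset_empty_iff.1 (hN_empty x ▸ interior_mono (image_mono (hKN x)))
  simpa [hK_empty] using hdense.nonempty

theorem exists_continuousMap_eqOn_closedBall_norm_le (E : Type*) [NormedAddCommGroup E]
    [NormedSpace ℝ E] {ε : ℝ} (hε : 0 < ε) :
    ∃ ρ : C(E, E), EqOn ρ id (closedBall 0 ε) ∧ ∀ z, ‖ρ z‖ ≤ ε := by
  have hmax (z : E) : 0 < max ε ‖z‖ := lt_max_of_lt_left hε
  have hcont : Continuous fun z : E ↦ (ε / max ε ‖z‖) • z :=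
    (continuous_const.div (by fun_prop) fun z ↦ (hmax z).ne').smul continuous_id
  refine ⟨⟨_, hcont⟩, fun z hz ↦ ?_, fun z ↦ ?_⟩
  · simp [max_eq_left (mem_closedBall_zero_iff.1 hz), hε.ne']
  · calc ‖(ε / max ε ‖z‖) • z‖ = ε / max ε ‖z‖ * ‖z‖ := by
          rw [norm_smul, Real.norm_of_nonneg (div_pos hε (hmax z)).le]
      _ ≤ ε / max ε ‖z‖ * max ε ‖z‖ := by
          gcongr
          exact le_max_right _ _
      _ = ε := div_mul_cancel₀ _ (hmax z).ne'

section EventuallyConst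

variable {X : Type*} (E : Type*) [TopologicalSpace X] [NormedAddCommGroup E] [NormedSpace ℝ E]

/-- The continuous maps that are constant on some neighbourhood, depending on the map, of `x₀`. -/
def eventuallyConstAt (x₀ : X) : Submodule ℝ C(X, E) where
  carrier := {p | EventuallyConst p (𝓝 x₀)}
  add_mem' hp hq := hp.add hq
  zero_mem' := .const 0
  smul_mem' c _ hp := hp.comp (c • ·)

theorem dense_eventuallyConstAt [CompactSpace X] (x₀ : X) :
    Dense (eventuallyConstAt E x₀ : Set C(X, E)) := by
  refine Metric.dense_iff.2 fun p r hr ↦ ?_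
  obtain ⟨ρ, hρ_id, hρ_le⟩ := exists_continuousMap_eqOn_closedBall_norm_le E (half_pos hr)
  refine ⟨p - ρ.comp (p - .const X (p x₀)), ?_, ?_⟩
  · have : ‖ρ.comp (p - .const X (p x₀))‖ ≤ r / 2 :=
      (ContinuousMap.norm_le _ (half_pos hr).le).2 fun x ↦ hρ_le _
    simpa [dist_eq_norm] using this.trans_lt (half_lt_self hr)
  · refine (EventuallyConst.const (p x₀)).congr ?_
    filter_upwards [p.continuous.continuousAt (closedBall_mem_nhds (p x₀) (half_pos hr))] with x hx
    have : ρ (p x - p x₀) = p x - p x₀ := hρ_id (by simpa [dist_eq_norm] using hx)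
    simp [this]

end EventuallyConst

theorem interior_image_val_nonempty {X : Type*} [TopologicalSpace X] {s : Set X}
    (hs : s ⊆ closure (interior s)) {U : Set s} (hU : IsOpen U) (hU_ne : U.Nonempty) :
    (interior (Subtype.val '' U)).Nonempty := by
  obtain ⟨V, hV, rfl⟩ := isOpen_induced_iff.1 hU
  obtain ⟨x, hxV⟩ := hU_ne
  obtain ⟨y, hy⟩ := mem_closure_iff.1 (hs x.2) V hV hxV
  rw [Subtype.image_preimage_coe, interior_inter, hV.interior_eq]
  exact ⟨y, hy.symm⟩

section WeightedSum

variable {ι E : Type*} [NormedAddCommGroup E] [NormedSpace ℝ E]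

theorem norm_smul_closedBall_le (c : ℝ) (y : closedBall (0 : E) 1) : ‖c • (y : E)‖ ≤ |c| := by
  simpa [norm_smul] using mul_le_of_le_one_right (abs_nonneg c) (mem_closedBall_zero_iff.1 y.2)

variable [CompleteSpace E]

theorem summable_smul_closedBall (w : ℓ¹(ι, ℝ)) (x : ι → closedBall (0 : E) 1) :
    Summable fun i ↦ w i • (x i : E) :=
  .of_norm_bounded w.2.summable_of_one.abs fun i ↦ norm_smul_closedBall_le (w i) (x i)

/-- The family of superpositions `x ↦ ∑ᵢ wᵢ xᵢ` of the coordinates of a power of the closed unit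
ball of `E`, as a linear function of the weights `w`, whose summability makes them continuous. -/
noncomputable def weightedSum : ℓ¹(ι, ℝ) →ₗ[ℝ] C(ι → closedBall (0 : E) 1, E) where
  toFun w :=
    { toFun x := ∑' i, w i • (x i : E)
      continuous_toFun := continuous_tsum (fun i ↦ by fun_prop) w.2.summable_of_one.abs
        fun i x ↦ norm_smul_closedBall_le (w i) (x i) }
  map_add' v w := by
    ext x
    simp [add_smul, (summable_smul_closedBall v x).tsum_add (summable_smul_closedBall w x)]
  map_smul' c w := by
    ext x
    simp [mul_smul, (summable_smul_closedBall w x).tsum_const_smul c]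

theorem weightedSum_apply (w : ℓ¹(ι, ℝ)) (x : ι → closedBall (0 : E) 1) :
    weightedSum w x = ∑' i, w i • (x i : E) :=
  rfl

theorem weightedSum_update [DecidableEq ι] (w : ℓ¹(ι, ℝ)) (x : ι → closedBall (0 : E) 1) (k : ι)
    (y : closedBall (0 : E) 1) :
    weightedSum w (Function.update x k y) = weightedSum w x - w k • (x k : E) + w k • (y : E) := by
  have hdiff : weightedSum w (Function.update x k y) - weightedSum w x =
      w k • (y : E) - w k • (x k : E) := by
    rw [weightedSum_apply, weightedSum_apply,
      ← (summable_smul_closedBall w _).tsum_sub (summable_smul_closedBall w x), tsum_eq_single k]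
    · simp
    · intro i hi
      simp [Function.update_of_ne hi]
  rw [sub_add, ← neg_sub (w k • (y : E)), sub_neg_eq_add, ← hdiff, add_sub_cancel]

theorem interior_image_weightedSum_nonempty {w : ℓ¹(ι, ℝ)} (hw : w ≠ 0)
    {U : Set (ι → closedBall (0 : E) 1)} (hU : IsOpen U) (hU_ne : U.Nonempty) :
    (interior (weightedSum w '' U)).Nonempty := by
  classical
  obtain ⟨x, hx⟩ := hU_ne
  obtain ⟨k, hk⟩ : ∃ k, w k ≠ 0 := Function.ne_iff.1 (mt lp.eq_zero_iff_coeFn_eq_zero.2 hw)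
  let V : Set (closedBall (0 : E) 1) := Function.update x k ⁻¹' U
  have hV : (interior (Subtype.val '' V)).Nonempty := by
    refine interior_image_val_nonempty ?_ (hU.preimage (by fun_prop)) ⟨x k, by simpa [V]⟩
    rw [interior_closedBall _ one_ne_zero, closure_ball _ one_ne_zero]
  have hsub : (weightedSum w x - w k • (x k : E)) +ᵥ w k • Subtype.val '' V ⊆
      weightedSum w '' U := by
    rintro _ ⟨_, ⟨_, ⟨y, hy, rfl⟩, rfl⟩, rfl⟩
    exact ⟨_, hy, weightedSum_update w x k y⟩
  refine .mono (interior_mono hsub) ?_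
  rw [interior_vadd, interior_smul₀ hk]
  exact hV.smul_set.vadd_set

theorem interior_range_add_weightedSum_comp_nonempty {X : Type*} [TopologicalSpace X] {x₀ : X}
    {Q : C(X, ι → closedBall (0 : E) 1)} (hQ : ∀ N ∈ 𝓝 x₀, (interior (Q '' N)).Nonempty)
    {p : C(X, E)} (hp : EventuallyConst p (𝓝 x₀)) {w : ℓ¹(ι, ℝ)} (hw : w ≠ 0) :
    (interior (range (p + (weightedSum w).comp Q))).Nonempty := by
  obtain ⟨c, hc⟩ := hp.eventuallyEq_const
  have hopen := interior_image_weightedSum_nonempty hw isOpen_interior (hQ _ hc)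
  have hsub : c +ᵥ weightedSum w '' interior (Q '' {x | p x = c}) ⊆
      range (p + (weightedSum w).comp Q) := by
    rintro _ ⟨_, ⟨_, hy, rfl⟩, rfl⟩
    obtain ⟨x, hx : p x = c, rfl⟩ := interior_subset hy
    exact ⟨x, by simp [hx]⟩
  refine .mono (interior_mono hsub) ?_
  rw [interior_vadd]
  exact hopen.vadd_set

end WeightedSum

theorem topSpaceFilling_maximal_dense_lineable_general (X E : Type*) [TopologicalSpace X]
    [CompactSpace X] [PolishSpace X] [Uncountable X] [NormedAddCommGroup E] [NormedSpace ℝ E]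
    [FiniteDimensional ℝ E] [Nontrivial E] :
    Module.rank ℝ C(X, E) = 𝔠 ∧
    ∃ M : Submodule ℝ C(X, E), Dense (M : Set C(X, E)) ∧ Module.rank ℝ M = 𝔠 ∧
      ∀ f ∈ M, f ≠ 0 → (interior (range f)).Nonempty := by
  have := FiniteDimensional.proper ℝ E
  obtain ⟨Q, hQ⟩ := exists_continuousMap_surjective_of_uncountable X (ℕ → closedBall (0 : E) 1)
  obtain ⟨x₀, hx₀⟩ := exists_forall_mem_nhds_interior_image_nonempty Q hQ
  have hzero : ¬(interior (range (0 : C(X, E)))).Nonempty := fun h ↦ by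
    simpa using h.mono (interior_mono (t := {0}) (by simp))
  let T : ℓ¹(ℕ, ℝ) →ₗ[ℝ] C(X, E) := (ContinuousMap.compCLM ℝ E Q).toLinearMap ∘ₗ weightedSum
  have hT (p : C(X, E)) (hp : p ∈ eventuallyConstAt E x₀) (w : ℓ¹(ℕ, ℝ)) (hw : w ≠ 0) :
      (interior (range (p + T w))).Nonempty :=
    interior_range_add_weightedSum_comp_nonempty hx₀ hp hw
  obtain ⟨M, hM_dense, hM_rank, hM⟩ := exists_dense_submodule_forall_mem
    (A := {f | (interior (range f)).Nonempty}) (dense_eventuallyConstAt E x₀)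
    (aleph0_le_continuum.trans continuum_le_rank_lp_one) T hzero hT
  have hV : Module.rank ℝ C(X, E) ≤ 𝔠 :=
    (rank_le_card ℝ _).trans (mk_le_continuum_of_secondCountable _)
  have hM_le : 𝔠 ≤ Module.rank ℝ M := by
    rw [lift_uzero] at hM_rank
    simpa [hM_rank] using continuum_le_rank_lp_one
  exact ⟨hV.antisymm (hM_le.trans (Submodule.rank_le M)), M, hM_dense,
    ((Submodule.rank_le M).trans hV).antisymm hM_le, hM⟩

theorem topSpaceFilling_maximal_dense_lineable :
    Module.rank ℝ C(unitInterval, ℝ × ℝ) = Cardinal.continuum ∧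
    ∃ M : Submodule ℝ C(unitInterval, ℝ × ℝ),
      Dense (M : Set C(unitInterval, ℝ × ℝ)) ∧
      Module.rank ℝ M = Cardinal.continuum ∧
      ∀ f ∈ M, f ≠ 0 → f ∈ TopSpaceFilling := by
  have : Uncountable unitInterval := by
    rw [← aleph0_lt_mk_iff, mk_Icc_real zero_lt_one]
    exact aleph0_lt_continuum
  exact topSpaceFilling_maximal_dense_lineable_general unitInterval (ℝ × ℝ)
end

section
/- The family 𝒮ℱ of space-filling curves is strongly algebrable in C(I,ℝ²) regarded as a commutative ℝ-algebra under pointwise coordinatewise operations: there exists a sequence (f_n)_{n≥1} in C(I,ℝ²) such that for every N ∈ ℕ, every injective choice of indices n₁, …, n_N ∈ ℕ, and every nonzero real polynomial P in N variables with zero constant term, the function P(f_{n₁}, …, f_{n_N}) (evaluated in the algebra C(I,ℝ²)) is a space-filling curve; in particular P(f_{n₁}, …, f_{n_N}) ≠ 0, so (f_n)_{n≥1} generates a free infinitely generated subalgebra all of whose nonzero elements lie in 𝒮ℱ. -/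
open MvPolynomial Set Topology

section SpaceFilling

theorem mem_spaceFilling_of_range_eq_prod {φ : C(unitInterval, ℝ × ℝ)} {s t : Set ℝ}
    (hφ : range φ = s ×ˢ t) (hs : Convex ℝ s) (hs' : s.Nontrivial) (ht : Convex ℝ t)
    (ht' : t.Nontrivial) : φ ∈ SpaceFilling := by
  refine ⟨hφ ▸ (hs.prod ht).addHaar_frontier _, ?_⟩
  rw [hφ, interior_prod_eq]
  exact (hs.nontrivial_iff_nonempty_interior.1 hs').prod (ht.nontrivial_iff_nonempty_interior.1 ht')

theorem ne_zero_of_mem_spaceFilling {φ : C(unitInterval, ℝ × ℝ)} (hφ : φ ∈ SpaceFilling) :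
    φ ≠ 0 := by
  rintro rfl
  obtain ⟨-, hint⟩ := hφ
  simp [ContinuousMap.coe_zero, Pi.zero_def] at hint

end SpaceFilling

section PeanoCurve

theorem exists_isClosedEmbedding_unitInterval_of_cantorSpace :
    ∃ e : (ℕ → Bool) → unitInterval, IsClosedEmbedding e := by
  have hincl : Continuous (inclusion cantorSet_subset_unitInterval) :=
    continuous_inclusion cantorSet_subset_unitInterval
  exact ⟨_, (hincl.comp cantorSetHomeomorphNatToBool.symm.continuous).isClosedEmbedding
    ((inclusion_injective _).comp cantorSetHomeomorphNatToBool.symm.injective)⟩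

theorem exists_surjective_continuousMap_unitInterval (X : Type*) [TopologicalSpace X]
    [CompactSpace X] [TopologicalSpace.MetrizableSpace X] [Nonempty X] [TietzeExtension.{0} X] :
    ∃ γ : C(unitInterval, X), Function.Surjective γ := by
  let := TopologicalSpace.metrizableSpaceMetric X
  obtain ⟨F, hF, hFsurj⟩ := exists_nat_bool_continuous_surjective_of_compact X
  obtain ⟨e, he⟩ := exists_isClosedEmbedding_unitInterval_of_cantorSpace
  obtain ⟨γ, hγ⟩ := ContinuousMap.exists_extension' he ⟨F, hF⟩
  refine ⟨γ, Function.Surjective.of_comp (g := e) ?_⟩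
  rwa [hγ]

theorem exists_continuousMap_range_eq_box_prod_box (ι : Type*) [Countable ι] :
    ∃ γ : C(unitInterval, (ι → ℝ) × (ι → ℝ)),
      range γ = (univ.pi fun _ => unitInterval) ×ˢ (univ.pi fun _ => unitInterval) := by
  obtain ⟨γ, hγ⟩ := exists_surjective_continuousMap_unitInterval
    ((ι → unitInterval) × (ι → unitInterval))
  let coe : C(ι → unitInterval, ι → ℝ) := ⟨Pi.map fun _ => Subtype.val, by fun_prop⟩
  refine ⟨(coe.prodMap coe).comp γ, ?_⟩
  have hcoe : range coe = univ.pi fun _ => unitInterval := by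
    simp only [coe, ContinuousMap.coe_mk, range_piMap, Subtype.range_coe]
  calc
    range ((coe.prodMap coe).comp γ) = range (Prod.map coe coe) := hγ.range_comp (Prod.map coe coe)
    _ = (univ.pi fun _ => unitInterval) ×ˢ (univ.pi fun _ => unitInterval) := by
      rw [range_prodMap, hcoe]

end PeanoCurve

section Polynomial

variable {σ R : Type*}

theorem nontrivial_image_eval_pi [CommRing R] [IsDomain R] {s : σ → Set R}
    (hs : ∀ i, (s i).Infinite) {P : MvPolynomial σ R} (hP : P ∉ range C) :
    ((fun x => eval x P) '' univ.pi s).Nontrivial := by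
  obtain ⟨x₀, hx₀⟩ := univ_pi_nonempty_iff.2 fun i => (hs i).nonempty
  contrapose! hP
  refine ⟨eval x₀ P, (funext_set s hs fun x hx => ?_).symm⟩
  rw [eval_C]
  exact hP (mem_image_of_mem _ hx) (mem_image_of_mem _ hx₀)

theorem convex_image_eval_pi {s : σ → Set ℝ} (hs : ∀ i, Convex ℝ (s i)) (P : MvPolynomial σ ℝ) :
    Convex ℝ ((fun x => eval x P) '' univ.pi s) :=
  ((isPreconnected_univ_pi fun i => (hs i).isPreconnected).image _
    (continuous_eval P).continuousOn).convex

theorem notMem_range_C_of_constantCoeff_eq_zero [CommSemiring R] {P : MvPolynomial σ R}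
    (hP : P ≠ 0) (hP0 : constantCoeff P = 0) : P ∉ range C := by
  rintro ⟨c, rfl⟩
  exact hP (by rw [← constantCoeff_C σ c, hP0, C_0])

variable {T : Type*} [TopologicalSpace T] [CommSemiring R] [TopologicalSpace R]

/-- The planar curve formed by the `i`-th coordinates of the two components of `γ`. With `γ` onto
the square of the Hilbert cube, these curves are the free generators. -/
def coordinateCurve (γ : C(T, (σ → R) × (σ → R))) (i : σ) : C(T, R × R) where
  toFun t := ((γ t).1 i, (γ t).2 i)

variable [IsTopologicalSemiring R]

theorem coe_aeval_coordinateCurve (γ : C(T, (σ → R) × (σ → R))) (P : MvPolynomial σ R) :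
    ⇑(aeval (coordinateCurve γ) P) = Prod.map (fun x => eval x P) (fun x => eval x P) ∘ γ := by
  funext t
  let evalAt : C(T, R × R) →ₐ[R] R × R := ContinuousMap.evalAlgHom R (R × R) t
  exact Prod.ext (comp_aeval_apply _ ((AlgHom.fst R R R).comp evalAt) P)
    (comp_aeval_apply _ ((AlgHom.snd R R R).comp evalAt) P)

theorem range_aeval_coordinateCurve {γ : C(T, (σ → R) × (σ → R))} {s t : Set (σ → R)}
    (hγ : range γ = s ×ˢ t) (P : MvPolynomial σ R) :
    range (aeval (coordinateCurve γ) P) =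
      ((fun x => eval x P) '' s) ×ˢ ((fun x => eval x P) '' t) := by
  rw [coe_aeval_coordinateCurve, range_comp, hγ, prodMap_image_prod]

end Polynomial

theorem spaceFilling_strongly_algebrable_general (ι : Type*) [Countable ι] :
    ∃ f : ι → C(unitInterval, ℝ × ℝ),
      ∀ P : MvPolynomial ι ℝ, P ∉ range C → aeval f P ∈ SpaceFilling := by
  obtain ⟨γ, hγ⟩ := exists_continuousMap_range_eq_box_prod_box ι
  refine ⟨coordinateCurve γ, fun P hP => ?_⟩
  have hconvex := convex_image_eval_pi (fun _ : ι => convex_Icc (0 : ℝ) 1) P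
  have hnontrivial := nontrivial_image_eval_pi (fun _ : ι => Icc_infinite (zero_lt_one' ℝ)) hP
  exact mem_spaceFilling_of_range_eq_prod (range_aeval_coordinateCurve hγ P)
    hconvex hnontrivial hconvex hnontrivial

/-- The family 𝒮ℱ is strongly algebrable in the commutative ℝ-algebra `C(I, ℝ×ℝ)`
(pointwise coordinatewise operations): there is a sequence whose members generate a
free infinitely generated subalgebra all of whose nonzero elements are space-filling. -/
theorem spaceFilling_strongly_algebrable :
    ∃ f : ℕ → C(unitInterval, ℝ × ℝ),
      ∀ (N : ℕ) (n : Fin N → ℕ), Function.Injective n →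
        ∀ P : MvPolynomial (Fin N) ℝ, P ≠ 0 → MvPolynomial.coeff 0 P = 0 →
          MvPolynomial.aeval (fun i => f (n i)) P ∈ SpaceFilling ∧
          MvPolynomial.aeval (fun i => f (n i)) P ≠ 0 := by
  obtain ⟨f, hf⟩ := spaceFilling_strongly_algebrable_general ℕ
  refine ⟨f, fun N n hn P hP hP0 => ?_⟩
  have hmem : aeval (f ∘ n) P ∈ SpaceFilling := by
    rw [← aeval_rename]
    exact hf _ <| notMem_range_C_of_constantCoeff_eq_zero
      ((map_ne_zero_iff _ (rename_injective n hn)).2 hP) ((constantCoeff_rename n P).trans hP0)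
  exact ⟨hmem, ne_zero_of_mem_spaceFilling hmem⟩
end

section
/- Let S¹ = {(x,y) ∈ ℝ² : x² + y² = 1} and let f : I → S¹ be given by f(t) = (cos(4πt), sin(4πt)). Then every continuous map g : I → S¹ satisfying sup_{t ∈ I} d_∞(g(t), f(t)) < 1/2 is surjective onto S¹. In particular, the set CS(I,S¹) of continuous surjections I → S¹ has nonempty interior in C(I,S¹) endowed with the uniform metric. -/
/-- The unit circle `S¹ = {(x,y) ∈ ℝ² : x² + y² = 1}`, as a subset of `ℝ × ℝ`
(the latter carrying the maximum metric `d_∞`). -/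
def circleSet : Set (ℝ × ℝ) := {p | p.1 ^ 2 + p.2 ^ 2 = 1}

/-!
If `g` is never antipodal to `exp (i F)`, then `g / exp (i F)` avoids the branch cut of `arg`, so
`F + arg (g / exp (i F))` is a continuous angle for `g` at distance less than `π` from `F`. When `F`
climbs by `4π` this angle climbs by at least `2π`, hence takes every value modulo `2π`. In the
maximum metric, antipodal points of the circle are at distance at least `√2`.
-/

open Function
open scoped Real

section UnitCircle

variable {X : Type*} [TopologicalSpace X]

lemma coe_circle_mem_slitPlane_iff {z : Circle} : (z : ℂ) ∈ Complex.slitPlane ↔ z ≠ -1 := by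
  have harg : Complex.arg (z : ℂ) = π ↔ z = -1 := by
    rw [← Circle.arg_eq_arg, Circle.coe_neg, Circle.coe_one, Complex.arg_neg_one]
  simp only [Complex.mem_slitPlane_iff_arg, ne_eq, harg, z.coe_ne_zero, not_false_eq_true, and_true]

lemma exists_continuous_angle_of_ne_neg_exp {F : X → ℝ} (hF : Continuous F) {g : X → Circle}
    (hg : Continuous g) (hne : ∀ x, g x ≠ -Circle.exp (F x)) :
    ∃ θ : X → ℝ, Continuous θ ∧ (∀ x, Circle.exp (θ x) = g x) ∧ ∀ x, |θ x - F x| < π := by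
  have hslit (x : X) : ((g x / Circle.exp (F x) : Circle) : ℂ) ∈ Complex.slitPlane := by
    rw [coe_circle_mem_slitPlane_iff, ne_eq, div_eq_iff_eq_mul, neg_one_mul]
    exact hne x
  have hquot : Continuous fun x ↦ ((g x / Circle.exp (F x) : Circle) : ℂ) :=
    continuous_subtype_val.comp (hg.div' (by fun_prop))
  refine ⟨fun x ↦ F x + Complex.arg ↑(g x / Circle.exp (F x)), ?_, fun x ↦ ?_, fun x ↦ ?_⟩
  · exact hF.add (Complex.continuousOn_arg.comp_continuous hquot hslit)
  · rw [Circle.exp_add, Circle.exp_arg, mul_div_cancel]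
  · rw [add_sub_cancel_left, abs_lt]
    exact ⟨Complex.neg_pi_lt_arg _,
      (Complex.arg_le_pi _).lt_of_ne (Complex.slitPlane_arg_ne_pi (hslit x))⟩

variable [PreconnectedSpace X]

lemma surjective_exp_comp_of_add_two_pi_le {θ : X → ℝ} (hθ : Continuous θ) {a b : X}
    (hab : θ a + 2 * π ≤ θ b) : Surjective fun x ↦ Circle.exp (θ x) := by
  intro z
  obtain ⟨t, ht, rfl⟩ : z ∈ Circle.exp '' Set.Icc (θ a) (θ a + 2 * π) := by
    rw [Circle.periodic_exp.image_Icc Real.two_pi_pos]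
    exact Circle.exp_surjective z
  obtain ⟨x, rfl⟩ := intermediate_value_univ a b hθ ⟨ht.1, ht.2.trans hab⟩
  exact ⟨x, rfl⟩

lemma surjective_of_ne_neg_exp {F : X → ℝ} (hF : Continuous F) {a b : X}
    (hab : F a + 4 * π ≤ F b) {g : X → Circle} (hg : Continuous g)
    (hne : ∀ x, g x ≠ -Circle.exp (F x)) : Surjective g := by
  obtain ⟨θ, hθ, hexp, hdist⟩ := exists_continuous_angle_of_ne_neg_exp hF hg hne
  have hθab : θ a + 2 * π ≤ θ b := by
    linarith [(abs_lt.1 (hdist a)).2, (abs_lt.1 (hdist b)).1]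
  simpa only [hexp] using surjective_exp_comp_of_add_two_pi_le hθ hθab

end UnitCircle

/-- The identification of `S¹ ⊆ ℝ²` with the unit circle of `ℂ`, `(x, y) ↦ x + iy`. It is not an
isometry, because `circleSet` carries the maximum metric. -/
noncomputable def circleSetHomeomorph : circleSet ≃ₜ Circle :=
  Complex.equivRealProdCLM.symm.toHomeomorph.subtype fun p ↦ by
    simp [circleSet, Submonoid.unitSphere, Complex.norm_def, Complex.normSq_apply, sq]

lemma coe_circleSetHomeomorph (p : circleSet) :
    (circleSetHomeomorph p : ℂ) = Complex.equivRealProdCLM.symm p :=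
  rfl

lemma circleSetHomeomorph_eq_exp {p : circleSet} {t : ℝ}
    (hp : (p : ℝ × ℝ) = (Real.cos t, Real.sin t)) : circleSetHomeomorph p = Circle.exp t := by
  apply Circle.ext
  rw [coe_circleSetHomeomorph, hp, Circle.coe_exp]
  apply Complex.ext <;> simp [Complex.exp_ofReal_mul_I_re, Complex.exp_ofReal_mul_I_im]

lemma coe_eq_neg_of_circleSetHomeomorph_eq_neg {p q : circleSet}
    (h : circleSetHomeomorph p = -circleSetHomeomorph q) : (p : ℝ × ℝ) = -q := by
  apply Complex.equivRealProdCLM.symm.injective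
  rw [map_neg, ← coe_circleSetHomeomorph, ← coe_circleSetHomeomorph, h, Circle.coe_neg]

lemma sqrt_two_le_dist_of_coe_eq_neg {p q : circleSet} (h : (p : ℝ × ℝ) = -q) :
    √2 ≤ dist p q := by
  have hdist : dist p q = 2 * ‖(q : ℝ × ℝ)‖ := by
    rw [Subtype.dist_eq, h, dist_comm, dist_eq_norm, sub_neg_eq_add, ← two_smul ℝ, norm_smul,
      Real.norm_ofNat]
  have hq : (q : ℝ × ℝ).1 ^ 2 + (q : ℝ × ℝ).2 ^ 2 = 1 := q.2
  have hfst : (q : ℝ × ℝ).1 ^ 2 ≤ ‖(q : ℝ × ℝ)‖ ^ 2 := sq_le_sq.2 <| by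
    simpa only [Real.norm_eq_abs, abs_norm] using norm_fst_le (q : ℝ × ℝ)
  have hsnd : (q : ℝ × ℝ).2 ^ 2 ≤ ‖(q : ℝ × ℝ)‖ ^ 2 := sq_le_sq.2 <| by
    simpa only [Real.norm_eq_abs, abs_norm] using norm_snd_le (q : ℝ × ℝ)
  exact Real.sqrt_le_iff.2 ⟨dist_nonneg, by rw [hdist]; linarith⟩

theorem circle_surjections_nonempty_interior_general {X : Type*} [TopologicalSpace X]
    [CompactSpace X] [PreconnectedSpace X] {F : X → ℝ} (hF : Continuous F) {a b : X}
    (hab : F a + 4 * π ≤ F b) (f : C(X, circleSet))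
    (hf : ∀ x, (f x : ℝ × ℝ) = (Real.cos (F x), Real.sin (F x))) :
    (∀ g : C(X, circleSet), dist g f < √2 → Surjective g) ∧
      (interior {g : C(X, circleSet) | Surjective g}).Nonempty := by
  have hsurj (g : C(X, circleSet)) (hg : dist g f < √2) : Surjective g := by
    rw [← EquivLike.comp_surjective g circleSetHomeomorph]
    refine surjective_of_ne_neg_exp hF hab (by fun_prop) fun x hx ↦ ?_
    rw [← circleSetHomeomorph_eq_exp (hf x)] at hx
    have hfar := sqrt_two_le_dist_of_coe_eq_neg (coe_eq_neg_of_circleSetHomeomorph_eq_neg hx)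
    exact (hfar.trans (ContinuousMap.dist_apply_le_dist x)).not_gt hg
  exact ⟨hsurj, f, mem_interior_iff_mem_nhds.2 <|
    Metric.mem_nhds_iff.2 ⟨√2, by positivity, hsurj⟩⟩

theorem circle_surjections_nonempty_interior
    (f : C(unitInterval, circleSet))
    (hf : ∀ t : unitInterval,
      (f t : ℝ × ℝ) = (Real.cos (4 * Real.pi * t), Real.sin (4 * Real.pi * t))) :
    (∀ g : C(unitInterval, circleSet), dist g f < 1 / 2 → Function.Surjective ⇑g) ∧
    (interior {g : C(unitInterval, circleSet) | Function.Surjective ⇑g}).Nonempty := by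
  obtain ⟨hsurj, hint⟩ := circle_surjections_nonempty_interior_general
    (F := fun t : unitInterval ↦ 4 * π * t) (a := 0) (b := 1) (by fun_prop) (by simp) f hf
  have hhalf : (1 / 2 : ℝ) < √2 := Real.lt_sqrt_of_sq_lt (by norm_num)
  exact ⟨fun g hg ↦ hsurj g (hg.trans hhalf), hint⟩
end

section
/- The set 𝒫 = CS(I,I²) of Peano curves is path-connected as a subspace of C(I,I²) endowed with the uniform metric ρ: for any two continuous surjections f, g : I → I² there exists a continuous path γ : [0,1] → C(I,I²) with γ(0) = f, γ(1) = g, and γ(s) a continuous surjection of I onto I² for every s ∈ [0,1]. -/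
/-!
Extend a curve `f` by a path `q` starting at its endpoint, and consider the initial pieces of the
concatenation `f · q`, each rescaled to `[0, 1]`. Letting the length of the piece grow from `1 / 2`
to `1` deforms `f` into `f · q`, and every intermediate curve still passes through all the points
of `f`. By time reversal, `q · g` likewise deforms into `g` while covering all the points of `g`.
Hence, for a path `p` from the end of `f` to the start of `g`, one can go from `f` through
`f · (p · g)` and `p · g` to `g`.
-/

section CoveringCurves

open Set unitInterval

variable {X : Type*} [TopologicalSpace X] {S : Set X} {a b c d : X}

/-- The curves in `X` that pass through every point of `S`, as a subset of `C(I, X)` with the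
compact-open topology. The Peano curves are the case `X = I × I`, `S = univ`. -/
def coveringCurves (S : Set X) : Set C(I, X) := {h | S ⊆ range h}

theorem coe_subpath_trans_zero_half (α : Path a b) (β : Path b c) {m : I}
    (hm : (m : ℝ) = 1 / 2) : ⇑((α.trans β).subpath 0 m) = α := by
  funext t
  have rescale : (Icc.convexComb 0 m t : ℝ) = t / 2 := by
    simp [hm, div_eq_mul_inv]
  have le_half : (Icc.convexComb 0 m t : ℝ) ≤ 1 / 2 := by
    linarith [t.2.2]
  change (α.trans β) (Icc.convexComb 0 m t) = α t
  rw [Path.trans_apply, dif_pos le_half]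
  congr 1
  ext
  linarith

theorem joinedIn_coveringCurves_trans_left {α : Path a b} (β : Path b c) (hα : S ⊆ range α) :
    JoinedIn (coveringCurves S) α.toContinuousMap (α.trans β).toContinuousMap := by
  let half : I := ⟨1 / 2, by norm_num, by norm_num⟩
  have initial_half : ⇑((α.trans β).subpath 0 half) = α := coe_subpath_trans_zero_half α β rfl
  have continuous_endpoint : Continuous (Icc.convexComb half 1) := Icc.continuous_convexComb half 1
  let piece : C(I × I, X) :=
    { toFun x := (α.trans β).subpath 0 (Icc.convexComb half 1 x.1) x.2
      continuous_toFun := (α.trans β).subpath_continuous_family.comp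
        (continuous_const.prodMk ((continuous_endpoint.comp continuous_fst).prodMk
          continuous_snd)) }
  refine ⟨⟨piece.curry, ?_, ?_⟩, fun s ↦ ?_⟩
  · ext t
    change (α.trans β).subpath 0 (Icc.convexComb half 1 0) t = α t
    rw [Icc.convexComb_zero, initial_half]
  · ext t
    change (α.trans β).subpath 0 (Icc.convexComb half 1 1) t = (α.trans β) t
    rw [Icc.convexComb_one, Path.subpath_zero_one, Path.cast_coe]
  · have half_le : half ≤ Icc.convexComb half 1 s := Icc.le_convexComb le_one' s
    calc S ⊆ range α := hα
      _ = (α.trans β) '' Icc 0 half := by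
        rw [← initial_half, Path.range_subpath_of_le _ _ _ nonneg']
      _ ⊆ (α.trans β) '' Icc 0 (Icc.convexComb half 1 s) := by gcongr
      _ = range ((α.trans β).subpath 0 (Icc.convexComb half 1 s)) :=
        (Path.range_subpath_of_le _ _ _ nonneg').symm

theorem joinedIn_coveringCurves_symm {α : Path a b} {β : Path c d}
    (h : JoinedIn (coveringCurves S) α.toContinuousMap β.toContinuousMap) :
    JoinedIn (coveringCurves S) α.symm.toContinuousMap β.symm.toContinuousMap := by
  refine (h.map (ContinuousMap.continuous_precomp ⟨σ, continuous_symm⟩)).mono ?_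
  rintro _ ⟨k, hk, rfl⟩
  exact (hk : S ⊆ range k).trans (symm_bijective.surjective.range_comp k).ge

theorem joinedIn_coveringCurves_trans_right (α : Path a b) {β : Path b c} (hβ : S ⊆ range β) :
    JoinedIn (coveringCurves S) β.toContinuousMap (α.trans β).toContinuousMap := by
  have reversed := joinedIn_coveringCurves_trans_left α.symm (hβ.trans β.symm_range.ge)
  simpa only [Path.trans_symm, Path.symm_symm] using joinedIn_coveringCurves_symm reversed

theorem joined_of_inter_range_nonempty {α : Path a b} {β : Path c d}
    (h : (range α ∩ range β).Nonempty) : Joined b c := by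
  obtain ⟨_, ⟨u, rfl⟩, v, huv⟩ := h
  have α_joined : Joined (α 1) (α u) := ⟨α.subpath 1 u⟩
  have β_joined : Joined (β v) (β 0) := ⟨β.subpath v 0⟩
  rw [α.target] at α_joined
  rw [β.source, huv] at β_joined
  exact α_joined.trans β_joined

theorem peano_pathConnected_general (hS : S.Nonempty) {f g : C(I, X)}
    (hf : f ∈ coveringCurves S) (hg : g ∈ coveringCurves S) : JoinedIn (coveringCurves S) f g := by
  let α : Path (f 0) (f 1) := ⟨f, rfl, rfl⟩
  let β : Path (g 0) (g 1) := ⟨g, rfl, rfl⟩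
  have hα : S ⊆ range α := hf
  have hβ : S ⊆ range β := hg
  obtain ⟨p⟩ := joined_of_inter_range_nonempty (hS.mono (subset_inter hα hβ))
  have hpβ : S ⊆ range (p.trans β) := hβ.trans (subset_union_right.trans (p.trans_range β).ge)
  have extend_right : JoinedIn (coveringCurves S) f (α.trans (p.trans β)).toContinuousMap :=
    joinedIn_coveringCurves_trans_left (p.trans β) hα
  have drop_left : JoinedIn (coveringCurves S) (α.trans (p.trans β)).toContinuousMap
      (p.trans β).toContinuousMap :=
    (joinedIn_coveringCurves_trans_right α hpβ).symm
  have drop_connection : JoinedIn (coveringCurves S) (p.trans β).toContinuousMap g :=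
    (joinedIn_coveringCurves_trans_right p hβ).symm
  exact extend_right.trans (drop_left.trans drop_connection)

end CoveringCurves

theorem peano_pathConnected (f g : C(unitInterval, unitInterval × unitInterval))
    (hf : Function.Surjective ⇑f) (hg : Function.Surjective ⇑g) :
    ∃ γ : C(unitInterval, C(unitInterval, unitInterval × unitInterval)),
      γ 0 = f ∧ γ 1 = g ∧ ∀ s, Function.Surjective ⇑(γ s) := by
  obtain ⟨γ, hγ⟩ := peano_pathConnected_general Set.univ_nonempty hf.range_eq.ge hg.range_eq.ge
  exact ⟨γ, γ.source, γ.target, fun s ↦ Set.range_eq_univ.1 (Set.univ_subset_iff.1 (hγ s))⟩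
end
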